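/- Classification of singular vectors, case κ = n−1: let (ε₁,…,ε_n) = (1^{n−1},0) (so 𝒲 = V^{⊗(n−1)}⊗F) and l, m ∈ ℕ. A vector of 𝒲_l⊗𝒲_m that is a simultaneous eigenvector of all Δ(k_i) (i ∈ ℤ/nℤ) and is annihilated by Δ(e_i) for all 1 ≤ i ≤ n−1 is a nonzero scalar multiple of ξ_s^{l,m} for some 0 ≤ s ≤ min(n−1, l, m); conversely every such ξ_s^{l,m} has these properties. -/

import Mathlib

/-!
Write a vector `v` of `𝒲_l ⊗ 𝒲_m` in the basis `|a⟩ ⊗ |b⟩`, with coefficients `co ε a b v`. Let `r ≥ 1`,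
let `p = r - 1` be the preceding site, which is fermionic, and put `δ = d_p - d_r`. The equation
`Δ(e_r) v = 0` then reads (`co_dE`)
`co a (b + δ) + κ_b · co (a + δ) b = 0` for all admissible `a`, `b`, with `κ_b ≠ 0`.
Hence the support of a killed vector is closed under moving a particle one site to the right in one
factor, whenever this is admissible, together with the opposite move in the other factor; in particular
the opposite move is then admissible too.

This has two consequences. The total fermionic occupation of a support pair is `(0^{n-1-s}, 1^s)` for
some `s` (`shape`). All particles of either factor can be pushed to the bosonic last site (`clear`): for
the second factor, this leads to the pair `(|0^{n-1-s}, 1^s, l-s⟩, |0^{n-1}, m⟩)`, so that `s ≤ l`; for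
the first factor, it gives `s ≤ m`. Therefore a killed vector whose coefficients at all these base pairs
vanish is zero (`eq_zero_of_killed`).

On the other hand, `ξ_s` satisfies the equations above (`dE_xi`); this is a computation with its
coefficients `(-1)^j q^{j(m-s+1) + inv}`, in which `inv` is written as a bilinear form in `a` and `b`.
The vector `ξ_s` has coefficient `1` at the base pair of `s` and `0` at the other ones. Finally
`Δ(k_{n-1})` has different eigenvalues at base pairs with different `s`, because `q` is not a root of
unity (`kap_base_inj`), so a killed simultaneous eigenvector is nonzero at exactly one base pair, and it
is the corresponding multiple of `ξ_s`.
-/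

open scoped BigOperators

set_option synthInstance.maxHeartbeats 1000000
set_option maxHeartbeats 1000000

noncomputable section

namespace TetraGQ

/-! ## Scalar ingredients -/

/-- `(a;qb)_m = ∏_{k=0}^{m-1} (1 - a qb^k)`. -/
def poch (qb a : ℂ) (m : ℕ) : ℂ := ∏ k ∈ Finset.range m, (1 - a * qb ^ k)

/-- The `q`-binomial `binom(m,k)_qb`, zero unless `k ≤ m`. -/
def qbinom (qb : ℂ) (m k : ℕ) : ℂ :=
  if k ≤ m then poch qb qb m / (poch qb qb k * poch qb qb (m - k)) else 0

/-- `[m] = (q^m - q^{-m})/(q - q^{-1})`. -/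
def qnum (q : ℂ) (m : ℕ) : ℂ := (q ^ m - q⁻¹ ^ m) / (q - q⁻¹)

/-- `[m]! = ∏_{k=1}^m [k]`. -/
def qfac (q : ℂ) (m : ℕ) : ℂ := ∏ k ∈ Finset.range m, qnum q (k + 1)

/-- The symmetric `q`-binomial `[m choose k]`, zero unless `k ≤ m`. -/
def qbin (q : ℂ) (m k : ℕ) : ℂ :=
  if k ≤ m then qfac q m / (qfac q k * qfac q (m - k)) else 0

/-- The 3D `R` matrix entry `R^{a,b,c}_{i,j,k}`. -/
def R3 (q : ℂ) (a b c i j k : ℕ) : ℂ :=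
  (if a + b = i + j ∧ b + c = j + k then (1 : ℂ) else 0) *
    ∑ lam ∈ Finset.range (b + 1),
      (-1 : ℂ) ^ lam *
        q ^ ((i : ℤ) * ((c : ℤ) - (j : ℤ)) + ((k : ℤ) + 1) * (lam : ℤ) +
            ((b : ℤ) - (lam : ℤ)) * ((b : ℤ) - (lam : ℤ) - (k : ℤ))) *
        (poch (q ^ 2) (q ^ 2) (c + (b - lam)) / poch (q ^ 2) (q ^ 2) c) *
        qbinom (q ^ 2) i (b - lam) * qbinom (q ^ 2) j lam

/-- The 3D `L` matrix entry `L^{a,b,c}_{i,j,k}`. -/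
def L3 (q : ℂ) (a b c i j k : ℕ) : ℂ :=
  if a = 0 ∧ b = 0 ∧ i = 0 ∧ j = 0 ∧ c = k then 1
  else if a = 1 ∧ b = 1 ∧ i = 1 ∧ j = 1 ∧ c = k then 1
  else if a = 0 ∧ b = 1 ∧ i = 0 ∧ j = 1 ∧ c = k then -q ^ (k + 1)
  else if a = 1 ∧ b = 0 ∧ i = 1 ∧ j = 0 ∧ c = k then q ^ k
  else if a = 0 ∧ b = 1 ∧ i = 1 ∧ j = 0 ∧ c + 1 = k then 1 - q ^ (2 * k)
  else if a = 1 ∧ b = 0 ∧ i = 0 ∧ j = 1 ∧ c = k + 1 then 1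
  else 0

/-- `S^(0) = R`, `S^(1) = L`. -/
def Sg (q : ℂ) (e : Bool) (a b c i j k : ℕ) : ℂ :=
  if e then L3 q a b c i j k else R3 q a b c i j k

/-- Coefficient of `z^{c0}` in the trace solution matrix element
`S₀(z)^{a,b}_{i,j}`. -/
def trCoef (q : ℂ) {n : ℕ} [NeZero n] (ε : Fin n → Bool) (a b i j : Fin n → ℕ)
    (c0 : ℕ) : ℂ :=
  ∑ᶠ c : Fin n → ℕ,
    if c 0 = c0 then
      ∏ t : Fin n, Sg q (ε t) (a t) (b t) (c t) (i t) (j t) (c (t + 1))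
    else 0

/-- Coefficient of `z^{c0}` in the boundary solution matrix element
`S₀^{1,1}(z)^{a,b}_{i,j}`. -/
def bdCoef (q : ℂ) {n : ℕ} (ε : Fin n → Bool) (a b i j : Fin n → ℕ) (c0 : ℕ) : ℂ :=
  ∑ᶠ c : Fin (n + 1) → ℕ,
    if c 0 = c0 then
      poch (q ^ 2) (q ^ 2) c0 / (poch q q c0 * poch q q (c (Fin.last n))) *
        ∏ t : Fin n, Sg q (ε t) (a t) (b t) (c t.castSucc) (i t) (j t) (c t.succ)
    else 0

/-- Coefficient of `z^{c0}` in the boundary solution matrix element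
`S₀^{s,t}(z)^{a,b}_{i,j}`. -/
def bdCoefST (q : ℂ) (s t : ℕ) {n : ℕ} (ε : Fin n → Bool) (a b i j : Fin n → ℕ)
    (c0 : ℕ) : ℂ :=
  ∑ᶠ c : Fin (n + 1) → ℕ,
    if c 0 = c0 then
      poch (q ^ 2) (q ^ 2) (s * c0) /
          (poch (q ^ s ^ 2) (q ^ s ^ 2) c0 * poch (q ^ t ^ 2) (q ^ t ^ 2) (c (Fin.last n))) *
        ∏ u : Fin n,
          Sg q (ε u) (a u) (b u)
            (if u.castSucc = 0 then s * c0 else c u.castSucc) (i u) (j u)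
            (if u.succ = Fin.last n then t * c (Fin.last n) else c u.succ)
    else 0

/-! ## The spaces `𝒲` and `𝒲⊗𝒲` -/

/-- `m` is an admissible occupation vector: at positions with `ε = 1` the entry is `≤ 1`. -/
def Ok {n : ℕ} (ε : Fin n → Bool) (m : Fin n → ℕ) : Prop := ∀ t, ε t = true → m t ≤ 1

instance {n : ℕ} (ε : Fin n → Bool) : DecidablePred (Ok ε) := fun m =>
  decidable_of_iff (∀ t, ε t = true → m t ≤ 1) Iff.rfl

/-- Basis labels of `𝒲`. -/
def Idx {n : ℕ} (ε : Fin n → Bool) : Type := {m : Fin n → ℕ // Ok ε m}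

/-- The space `𝒲` with basis `|m⟩`, over the field `L`. -/
abbrev W (L : Type) [Field L] {n : ℕ} (ε : Fin n → Bool) : Type := Idx ε →₀ L

/-- The space `𝒲 ⊗ 𝒲` with basis `|a⟩⊗|b⟩`, over the field `L`. -/
abbrev WW (L : Type) [Field L] {n : ℕ} (ε : Fin n → Bool) : Type := (Idx ε × Idx ε) →₀ L

/-- The ket `|m⟩ ∈ 𝒲`; it is `0` if any coordinate is out of range. -/
def ket (L : Type) [Field L] {n : ℕ} (ε : Fin n → Bool) (m : Fin n → ℤ) : W L ε :=
  if h : (∀ t, 0 ≤ m t) ∧ Ok ε (fun t => (m t).toNat) then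
    Finsupp.single ⟨fun t => (m t).toNat, h.2⟩ 1
  else 0

/-- The ket `|a⟩⊗|b⟩ ∈ 𝒲⊗𝒲`; it is `0` if any coordinate is out of range. -/
def kk (L : Type) [Field L] {n : ℕ} (ε : Fin n → Bool) (a b : Fin n → ℤ) : WW L ε :=
  if h : ((∀ t, 0 ≤ a t) ∧ Ok ε (fun t => (a t).toNat)) ∧
      ((∀ t, 0 ≤ b t) ∧ Ok ε (fun t => (b t).toNat)) then
    Finsupp.single (⟨fun t => (a t).toNat, h.1.2⟩, ⟨fun t => (b t).toNat, h.2.2⟩) 1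
  else 0

/-- The linear endomorphism of a free module determined by images of basis vectors. -/
def mkEnd (L : Type) [Field L] {α : Type} (v : α → (α →₀ L)) :
    (α →₀ L) →ₗ[L] (α →₀ L) :=
  Finsupp.lsum L fun m => LinearMap.toSpanSingleton L (α →₀ L) (v m)

/-- Product of vectors of `𝒲`, landing in `𝒲⊗𝒲`. -/
def tens (L : Type) [Field L] {n : ℕ} {ε : Fin n → Bool} (u v : W L ε) : WW L ε :=
  u.sum fun a ca => v.sum fun b cb => Finsupp.single (a, b) (ca * cb)

/-- The operator `A ⊗ B` on `𝒲⊗𝒲`. -/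
def opT (L : Type) [Field L] {n : ℕ} {ε : Fin n → Bool}
    (A B : W L ε →ₗ[L] W L ε) : WW L ε →ₗ[L] WW L ε :=
  mkEnd L fun mm => tens L (A (Finsupp.single mm.1 1)) (B (Finsupp.single mm.2 1))

/-- The subspace `𝒲_l ⊗ 𝒲_m` of `𝒲⊗𝒲`. -/
def WWlm (L : Type) [Field L] {n : ℕ} (ε : Fin n → Bool) (l m : ℕ) :
    Submodule L (WW L ε) :=
  Submodule.span L {v | ∃ p : Idx ε × Idx ε,
    (∑ t, p.1.1 t) = l ∧ (∑ t, p.2.1 t) = m ∧ v = Finsupp.single p 1}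

/-- The subspace `𝒲_l` of `𝒲`. -/
def Wl (L : Type) [Field L] {n : ℕ} (ε : Fin n → Bool) (l : ℕ) : Submodule L (W L ε) :=
  Submodule.span L {v | ∃ p : Idx ε, (∑ t, p.1 t) = l ∧ v = Finsupp.single p 1}

/-! ## The scalar field of formal Laurent series in `z` over `ℂ` -/

abbrev K : Type := LaurentSeries ℂ

/-- The power series `Σ_{c≥0} f(c) z^c` as an element of `K`. -/
def mkS (f : ℕ → ℂ) : K := HahnSeries.ofPowerSeries ℤ ℂ (PowerSeries.mk f)

/-- Constants `ℂ → K`. -/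
def cK : ℂ →+* K := HahnSeries.C

/-- The variable `z ∈ K`. -/
def zK : K := mkS fun c => if c = 1 then 1 else 0

/-! ## The solutions of the Yang-Baxter equation -/

/-- The unnormalized trace solution `S₀(z)` acting on `𝒲⊗𝒲`. -/
def S0tr (q : ℂ) {n : ℕ} [NeZero n] (ε : Fin n → Bool) : WW K ε →ₗ[K] WW K ε :=
  mkEnd K fun ij =>
    ∑ a ∈ Fintype.piFinset (fun t => Finset.range (ij.1.1 t + ij.2.1 t + 1)),
      mkS (trCoef q ε a (fun t => ij.1.1 t + ij.2.1 t - a t) ij.1.1 ij.2.1) •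
        kk K ε (fun t => (a t : ℤ)) (fun t => (ij.1.1 t : ℤ) + (ij.2.1 t : ℤ) - (a t : ℤ))

/-- The unnormalized boundary solution `S₀^{1,1}(z)` acting on `𝒲⊗𝒲`. -/
def S0bd (q : ℂ) {n : ℕ} (ε : Fin n → Bool) : WW K ε →ₗ[K] WW K ε :=
  mkEnd K fun ij =>
    ∑ a ∈ Fintype.piFinset (fun t => Finset.range (ij.1.1 t + ij.2.1 t + 1)),
      mkS (bdCoef q ε a (fun t => ij.1.1 t + ij.2.1 t - a t) ij.1.1 ij.2.1) •
        kk K ε (fun t => (a t : ℤ)) (fun t => (ij.1.1 t : ℤ) + (ij.2.1 t : ℤ) - (a t : ℤ))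

/-- The unnormalized boundary solution `S₀^{s,t}(z)` acting on `𝒲⊗𝒲`. -/
def S0bdST (q : ℂ) (s t : ℕ) {n : ℕ} (ε : Fin n → Bool) : WW K ε →ₗ[K] WW K ε :=
  mkEnd K fun ij =>
    ∑ a ∈ Fintype.piFinset (fun u => Finset.range (ij.1.1 u + ij.2.1 u + 1)),
      mkS (bdCoefST q s t ε a (fun u => ij.1.1 u + ij.2.1 u - a u) ij.1.1 ij.2.1) •
        kk K ε (fun u => (a u : ℤ)) (fun u => (ij.1.1 u : ℤ) + (ij.2.1 u : ℤ) - (a u : ℤ))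

/-- The diagonal gauge operator; `Kdiag pc ε s |m⟩ = pc^{s·(m₁+⋯+m_n)} |m⟩`
(`s = -1` gives `K`, `s = 1` gives `K⁻¹`). -/
def Kdiag (pc : ℂ) {n : ℕ} (ε : Fin n → Bool) (s : ℤ) : W K ε →ₗ[K] W K ε :=
  mkEnd K fun m => cK (pc ^ (s * ∑ t, (m.1 t : ℤ))) • Finsupp.single m 1

/-- The gauge transformed boundary solution `S̃₀^{1,1}(z) = (K⊗1) S₀^{1,1}(z) (1⊗K⁻¹)`. -/
def S0bdT (q pc : ℂ) {n : ℕ} (ε : Fin n → Bool) : WW K ε →ₗ[K] WW K ε :=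
  opT K (Kdiag pc ε (-1)) LinearMap.id ∘ₗ S0bd q ε ∘ₗ opT K LinearMap.id (Kdiag pc ε 1)

/-! ## The generalized quantum group actions -/

/-- Value of an occupation vector at a natural-number position. -/
def av {n : ℕ} (m : Fin n → ℕ) (p : ℕ) : ℕ := if h : p < n then m ⟨p, h⟩ else 0

/-- Unit coordinate vector at a natural-number position. -/
def dlt {n : ℕ} (p : ℕ) : Fin n → ℤ := fun t => if (t : ℕ) = p then 1 else 0

/-- `q_i = q` if `ε_i = 0` and `-q⁻¹` if `ε_i = 1` (0-based positions). -/
def qc (q : ℂ) {n : ℕ} (ε : Fin n → Bool) (p : ℕ) : ℂ :=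
  if h : p < n then (if ε ⟨p, h⟩ then -q⁻¹ else q) else q

/-- Type A generator `e_r` of the action `π_x`. -/
def eA (q : ℂ) {L : Type} [Field L] (ι : ℂ →+* L) {n : ℕ} (ε : Fin n → Bool) (x : L)
    (r : Fin n) : W L ε →ₗ[L] W L ε :=
  mkEnd L fun m =>
    (x ^ (if (r : ℕ) = 0 then 1 else 0) * ι (qnum q (av m.1 (((r : ℕ) + n - 1) % n)))) •
      ket L ε fun t => (m.1 t : ℤ) - dlt (((r : ℕ) + n - 1) % n) t + dlt (r : ℕ) t

/-- Type A generator `f_r` of the action `π_x`. -/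
def fA (q : ℂ) {L : Type} [Field L] (ι : ℂ →+* L) {n : ℕ} (ε : Fin n → Bool) (x : L)
    (r : Fin n) : W L ε →ₗ[L] W L ε :=
  mkEnd L fun m =>
    (x ^ (if (r : ℕ) = 0 then (-1 : ℤ) else 0) * ι (qnum q (av m.1 (r : ℕ)))) •
      ket L ε fun t => (m.1 t : ℤ) + dlt (((r : ℕ) + n - 1) % n) t - dlt (r : ℕ) t

/-- Type A generator `k_r^{s}` (`s = ±1`) of the action `π_x`. -/
def kA (q : ℂ) {L : Type} [Field L] (ι : ℂ →+* L) {n : ℕ} (ε : Fin n → Bool) (s : ℤ)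
    (r : Fin n) : W L ε →ₗ[L] W L ε :=
  mkEnd L fun m =>
    ι ((qc q ε (((r : ℕ) + n - 1) % n) ^ (-(av m.1 (((r : ℕ) + n - 1) % n) : ℤ)) *
        qc q ε (r : ℕ) ^ (av m.1 (r : ℕ) : ℤ)) ^ s) • Finsupp.single m 1

/-- Type B generator `e_r` of the action `π_x`. -/
def eB (q : ℂ) {L : Type} [Field L] (ι : ℂ →+* L) {n : ℕ} (ε : Fin n → Bool) (x : L)
    (r : Fin (n + 1)) : W L ε →ₗ[L] W L ε :=
  mkEnd L fun m =>
    if (r : ℕ) = 0 then x • ket L ε (fun t => (m.1 t : ℤ) + dlt 0 t)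
    else if (r : ℕ) = n then
      ι (qnum q (av m.1 (n - 1))) • ket L ε (fun t => (m.1 t : ℤ) - dlt (n - 1) t)
    else
      ι (qnum q (av m.1 ((r : ℕ) - 1))) •
        ket L ε (fun t => (m.1 t : ℤ) - dlt ((r : ℕ) - 1) t + dlt (r : ℕ) t)

/-- Type B generator `f_r` of the action `π_x`. -/
def fB (q : ℂ) {L : Type} [Field L] (ι : ℂ →+* L) {n : ℕ} (ε : Fin n → Bool) (x : L)
    (r : Fin (n + 1)) : W L ε →ₗ[L] W L ε :=
  mkEnd L fun m =>
    if (r : ℕ) = 0 then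
      (x⁻¹ * ι (qnum q (av m.1 0))) • ket L ε (fun t => (m.1 t : ℤ) - dlt 0 t)
    else if (r : ℕ) = n then ket L ε (fun t => (m.1 t : ℤ) + dlt (n - 1) t)
    else
      ι (qnum q (av m.1 (r : ℕ))) •
        ket L ε (fun t => (m.1 t : ℤ) + dlt ((r : ℕ) - 1) t - dlt (r : ℕ) t)

/-- Type B generator `k_r^{s}` (`s = ±1`) of the action `π_x`; `pc = i q^{-1/2}`. -/
def kB (q pc : ℂ) {L : Type} [Field L] (ι : ℂ →+* L) {n : ℕ} (ε : Fin n → Bool) (s : ℤ)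
    (r : Fin (n + 1)) : W L ε →ₗ[L] W L ε :=
  mkEnd L fun m =>
    ι ((if (r : ℕ) = 0 then pc⁻¹ * qc q ε 0 ^ (av m.1 0 : ℤ)
        else if (r : ℕ) = n then pc * qc q ε (n - 1) ^ (-(av m.1 (n - 1) : ℤ))
        else qc q ε ((r : ℕ) - 1) ^ (-(av m.1 ((r : ℕ) - 1) : ℤ)) *
          qc q ε (r : ℕ) ^ (av m.1 (r : ℕ) : ℤ)) ^ s) • Finsupp.single m 1

/-! ## Coproduct actions on `𝒲⊗𝒲` (type A) -/

/-- `Δ(e_r) = 1⊗e_r + e_r⊗k_r`, with `π_x` on the first factor, `π_y` on the second. -/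
def dE (q : ℂ) {L : Type} [Field L] (ι : ℂ →+* L) {n : ℕ} (ε : Fin n → Bool) (x y : L)
    (r : Fin n) : WW L ε →ₗ[L] WW L ε :=
  opT L LinearMap.id (eA q ι ε y r) + opT L (eA q ι ε x r) (kA q ι ε 1 r)

/-- `Δ'(e_r) = e_r⊗1 + k_r⊗e_r`. -/
def dE' (q : ℂ) {L : Type} [Field L] (ι : ℂ →+* L) {n : ℕ} (ε : Fin n → Bool) (x y : L)
    (r : Fin n) : WW L ε →ₗ[L] WW L ε :=
  opT L (eA q ι ε x r) LinearMap.id + opT L (kA q ι ε 1 r) (eA q ι ε y r)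

/-- `Δ(f_r) = f_r⊗1 + k_r⁻¹⊗f_r`. -/
def dF (q : ℂ) {L : Type} [Field L] (ι : ℂ →+* L) {n : ℕ} (ε : Fin n → Bool) (x y : L)
    (r : Fin n) : WW L ε →ₗ[L] WW L ε :=
  opT L (fA q ι ε x r) LinearMap.id + opT L (kA q ι ε (-1) r) (fA q ι ε y r)

/-- `Δ'(f_r) = 1⊗f_r + f_r⊗k_r⁻¹`. -/
def dF' (q : ℂ) {L : Type} [Field L] (ι : ℂ →+* L) {n : ℕ} (ε : Fin n → Bool) (x y : L)
    (r : Fin n) : WW L ε →ₗ[L] WW L ε :=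
  opT L LinearMap.id (fA q ι ε y r) + opT L (fA q ι ε x r) (kA q ι ε (-1) r)

/-- `Δ(k_r^s) = Δ'(k_r^s) = k_r^s ⊗ k_r^s`. -/
def dK (q : ℂ) {L : Type} [Field L] (ι : ℂ →+* L) {n : ℕ} (ε : Fin n → Bool) (s : ℤ)
    (r : Fin n) : WW L ε →ₗ[L] WW L ε :=
  opT L (kA q ι ε s r) (kA q ι ε s r)

/-! ## Coproduct actions on `𝒲⊗𝒲` (type B) -/

def dEB (q pc : ℂ) {L : Type} [Field L] (ι : ℂ →+* L) {n : ℕ} (ε : Fin n → Bool) (x y : L)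
    (r : Fin (n + 1)) : WW L ε →ₗ[L] WW L ε :=
  opT L LinearMap.id (eB q ι ε y r) + opT L (eB q ι ε x r) (kB q pc ι ε 1 r)

def dEB' (q pc : ℂ) {L : Type} [Field L] (ι : ℂ →+* L) {n : ℕ} (ε : Fin n → Bool) (x y : L)
    (r : Fin (n + 1)) : WW L ε →ₗ[L] WW L ε :=
  opT L (eB q ι ε x r) LinearMap.id + opT L (kB q pc ι ε 1 r) (eB q ι ε y r)

def dFB (q pc : ℂ) {L : Type} [Field L] (ι : ℂ →+* L) {n : ℕ} (ε : Fin n → Bool) (x y : L)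
    (r : Fin (n + 1)) : WW L ε →ₗ[L] WW L ε :=
  opT L (fB q ι ε x r) LinearMap.id + opT L (kB q pc ι ε (-1) r) (fB q ι ε y r)

def dFB' (q pc : ℂ) {L : Type} [Field L] (ι : ℂ →+* L) {n : ℕ} (ε : Fin n → Bool) (x y : L)
    (r : Fin (n + 1)) : WW L ε →ₗ[L] WW L ε :=
  opT L LinearMap.id (fB q ι ε y r) + opT L (fB q ι ε x r) (kB q pc ι ε (-1) r)

def dKB (q pc : ℂ) {L : Type} [Field L] (ι : ℂ →+* L) {n : ℕ} (ε : Fin n → Bool) (s : ℤ)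
    (r : Fin (n + 1)) : WW L ε →ₗ[L] WW L ε :=
  opT L (kB q pc ι ε s r) (kB q pc ι ε s r)

/-! ## Structure constants -/

/-- Type A structure constant `D_{i,j}` (as a product over 0-based positions). -/
def DA (q : ℂ) {n : ℕ} (ε : Fin n → Bool) (i j : Fin n) : ℂ :=
  ∏ p ∈ (({((i : ℕ) + n - 1) % n, (i : ℕ)} : Finset ℕ) ∩
      ({((j : ℕ) + n - 1) % n, (j : ℕ)} : Finset ℕ)),
    qc q ε p ^ (if i = j then (1 : ℤ) else -1)

/-- The set `⟨i⟩ = {i, i+1} ∩ [1,n]` of type B, translated to 0-based positions. -/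
def nodeB (n i : ℕ) : Finset ℕ :=
  if i = 0 then {0} else if i = n then {n - 1} else {i - 1, i}

/-- Type B structure constant `D_{i,j}`. -/
def DB (q : ℂ) {n : ℕ} (ε : Fin n → Bool) (i j : Fin (n + 1)) : ℂ :=
  ∏ p ∈ nodeB n (i : ℕ) ∩ nodeB n (j : ℕ), qc q ε p ^ (if i = j then (1 : ℤ) else -1)

/-! ## Distinguished vectors -/

/-- The vector `J_{n,j} = Σ_{i, Σi=j} q^{inv(i)} |i⟩⊗|1-i⟩`. -/
def Jfull (q : ℂ) {L : Type} [Field L] (ι : ℂ →+* L) {n : ℕ} (ε : Fin n → Bool)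
    (j : ℕ) : WW L ε :=
  ∑ i ∈ Fintype.piFinset (fun _ : Fin n => Finset.range 2),
    (if (∑ t, i t) = j then
        ι (q ^ (∑ s : Fin n, ∑ t : Fin n, if s < t then i s * (1 - i t) else 0))
      else 0) •
      kk L ε (fun t => (i t : ℤ)) (fun t => 1 - (i t : ℤ))

/-- Extension of a `Fin s`-tuple to `ℕ` by zero. -/
def ivf {s : ℕ} (i : Fin s → ℕ) : ℕ → ℕ := fun p => if h : p < s then i ⟨p, h⟩ else 0

/-- `inv(i₁,…,i_s) = Σ_{p<r} i_p (1 - i_r)`. -/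
def invv (s : ℕ) (iv : ℕ → ℕ) : ℕ :=
  ∑ p ∈ Finset.range s, ∑ r ∈ Finset.range s, if p < r then iv p * (1 - iv r) else 0

/-- Occupation vector `(0^{nn-s-t}, i₁,…,i_s, 1^t)`. -/
def winA (nn s t : ℕ) (iv : ℕ → ℕ) : Fin nn → ℤ := fun u =>
  if (u : ℕ) < nn - s - t then 0
  else if (u : ℕ) < nn - t then (iv ((u : ℕ) - (nn - s - t)) : ℤ)
  else 1

/-- The singular vector `ξ_t^{l,m}` for `κ = n`. -/
def xiA (q : ℂ) {L : Type} [Field L] (ι : ℂ →+* L) {n : ℕ} (ε : Fin n → Bool)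
    (l m t : ℕ) : WW L ε :=
  ∑ i ∈ Fintype.piFinset (fun _ : Fin (l + m - 2 * t) => Finset.range 2),
    (if (∑ u, i u) = l - t then ι (q ^ invv (l + m - 2 * t) (ivf i)) else 0) •
      kk L ε (winA n (l + m - 2 * t) t (ivf i))
        (winA n (l + m - 2 * t) t (fun p => 1 - ivf i p))

/-- Occupation vector `(0^{nn-s-1}, i₁,…,i_s, last)`. -/
def winA1 (nn s : ℕ) (iv : ℕ → ℕ) (last : ℤ) : Fin nn → ℤ := fun u =>
  if (u : ℕ) < nn - s - 1 then 0
  else if (u : ℕ) < nn - 1 then (iv ((u : ℕ) - (nn - s - 1)) : ℤ)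
  else last

/-- The singular vector `ξ_s^{l,m}` for `κ = n-1`. -/
def xiA1 (q : ℂ) {L : Type} [Field L] (ι : ℂ →+* L) {n : ℕ} (ε : Fin n → Bool)
    (l m s : ℕ) : WW L ε :=
  ∑ j ∈ Finset.range (s + 1),
    ∑ i ∈ Fintype.piFinset (fun _ : Fin s => Finset.range 2),
      (if (∑ u, i u) = s - j then
          ι ((-1 : ℂ) ^ j * q ^ (j * (m - s + 1)) * q ^ invv s (ivf i))
        else 0) •
        kk L ε (winA1 n s (ivf i) ((l : ℤ) + (j : ℤ) - (s : ℤ)))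
          (winA1 n s (fun p => 1 - ivf i p) ((m : ℤ) - (j : ℤ)))

/-- The singular vector `ξ_s^{l,m}` for `0 ≤ κ ≤ n-2`. -/
def xiA2 (q : ℂ) {L : Type} [Field L] (ι : ℂ →+* L) {n : ℕ} (ε : Fin n → Bool)
    (l m s : ℕ) : WW L ε :=
  ∑ j ∈ Finset.range (s + 1),
    ι ((-1 : ℂ) ^ j * q ^ ((j : ℤ) * (2 * (s : ℤ) - (m : ℤ) - (j : ℤ) - 1) + (m : ℤ) * (s : ℤ)) *
        qbin q s j) •
      kk L ε
        (fun u => if (u : ℕ) < n - 2 then 0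
          else if (u : ℕ) = n - 2 then (j : ℤ) else (l : ℤ) - (j : ℤ))
        (fun u => if (u : ℕ) < n - 2 then 0
          else if (u : ℕ) = n - 2 then (s : ℤ) - (j : ℤ) else (m : ℤ) - (s : ℤ) + (j : ℤ))

/-- The type B singular vector `ξ_l`. -/
def xiB (q pc : ℂ) {L : Type} [Field L] (ι : ℂ →+* L) {n : ℕ} (ε : Fin n → Bool)
    (l : ℕ) : WW L ε :=
  ∑ m ∈ Finset.range (l + 1),
    ι ((-pc) ^ (-(m : ℤ)) * q ^ ((m : ℤ) * (l : ℤ) - ((m * (m + 1) / 2 : ℕ) : ℤ)) *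
        qbin q l m) •
      kk L ε (fun u => if (u : ℕ) = n - 1 then (m : ℤ) else 0)
        (fun u => if (u : ℕ) = n - 1 then (l : ℤ) - (m : ℤ) else 0)

/-! ## Miscellany -/

/-- Apply a list of operators, the rightmost element of the list acting first. -/
def appList {L : Type} [Field L] {n : ℕ} {ε : Fin n → Bool}
    (ops : List (WW L ε →ₗ[L] WW L ε)) (v : WW L ε) : WW L ε :=
  ops.foldr (fun A w => A w) v

/-- A natural number as an element of `Fin n`. -/
def mfin {n : ℕ} [NeZero n] (p : ℕ) : Fin n :=
  ⟨p % n, Nat.mod_lt p (Nat.pos_of_ne_zero (NeZero.ne n))⟩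

/-- Reference weight-`l` occupation vector: `(0^{n-l},1^l)` if `κ = n`, `l·e_n` otherwise. -/
def refAN (n κ l : ℕ) : Fin n → ℕ := fun t =>
  if κ = n then (if n - l ≤ (t : ℕ) then 1 else 0) else (if (t : ℕ) = n - 1 then l else 0)

/-- The flip `P(u⊗v) = v⊗u` on `𝒲⊗𝒲`. -/
def Pop (L : Type) [Field L] {n : ℕ} (ε : Fin n → Bool) : WW L ε →ₗ[L] WW L ε :=
  mkEnd L fun p => Finsupp.single (p.2, p.1) 1

/-! ### Coefficients of vectors and operators -/

/-- Admissible integer labels: nonnegative, with at most one particle at each fermionic site. Labels are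
`ℤ`-valued so that moving a particle needs no truncated subtraction; `ket` and `kk` vanish on
inadmissible ones. -/
def Vd {n : ℕ} (ε : Fin n → Bool) (a : Fin n → ℤ) : Prop :=
  (∀ t, 0 ≤ a t) ∧ Ok ε (fun t => (a t).toNat)

/-- The integer label of a basis index of `𝒲`. -/
def toI {n : ℕ} {ε : Fin n → Bool} (x : Idx ε) : Fin n → ℤ := fun t => (x.1 t : ℤ)

lemma toI_inj {n : ℕ} {ε : Fin n → Bool} {x y : Idx ε} (h : toI x = toI y) : x = y := by
  apply Subtype.ext
  funext t
  have := congrFun h t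
  simpa [toI] using this

lemma Vd_toI {n : ℕ} {ε : Fin n → Bool} (x : Idx ε) : Vd ε (toI x) :=
  ⟨fun t => by simp [toI], fun t ht => by simpa [toI] using x.2 t ht⟩

lemma Vd.exists_toI {n : ℕ} {ε : Fin n → Bool} {a : Fin n → ℤ} (h : Vd ε a) :
    ∃ x : Idx ε, toI x = a :=
  ⟨⟨fun t => (a t).toNat, h.2⟩, by funext t; simpa [toI] using h.1 t⟩

section
variable {L : Type} [Field L] {n : ℕ} {ε : Fin n → Bool}

open Classical in
/-- The coefficient of `|a⟩ ⊗ |b⟩` in a vector of `𝒲 ⊗ 𝒲`, equal to `0` when `a` or `b` is inadmissible. -/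
def co (ε : Fin n → Bool) (a b : Fin n → ℤ) : WW L ε →ₗ[L] L :=
  Finsupp.lsum L fun z =>
    if toI z.1 = a ∧ toI z.2 = b then LinearMap.id else 0

open Classical in
lemma co_single (a b : Fin n → ℤ) (z : Idx ε × Idx ε) (c : L) :
    co ε a b (Finsupp.single z c) = if toI z.1 = a ∧ toI z.2 = b then c else 0 := by
  simp only [co, Finsupp.lsum_single]
  split_ifs <;> rfl

lemma co_toI (v : WW L ε) (x y : Idx ε) : co ε (toI x) (toI y) v = v (x, y) := by
  classical
  induction v using Finsupp.induction_linear with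
  | zero => simp
  | add f g hf hg => simp [hf, hg]
  | single z c =>
    rw [co_single, Finsupp.single_apply]
    refine if_congr ⟨fun h => Prod.ext (toI_inj h.1) (toI_inj h.2), ?_⟩ rfl rfl
    rintro rfl
    exact ⟨rfl, rfl⟩

lemma co_Vd {v : WW L ε} {a b : Fin n → ℤ} (h : co ε a b v ≠ 0) : Vd ε a ∧ Vd ε b := by
  classical
  contrapose! h
  induction v using Finsupp.induction_linear with
  | zero => simp
  | add f g hf hg => simp [hf, hg]
  | single z c =>
    rw [co_single, if_neg]
    rintro ⟨rfl, rfl⟩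
    exact h (Vd_toI _) (Vd_toI _)

lemma co_ext {v w : WW L ε} (h : ∀ a b, Vd ε a → Vd ε b → co ε a b v = co ε a b w) : v = w := by
  ext ⟨x, y⟩
  simpa [co_toI] using h _ _ (Vd_toI x) (Vd_toI y)

lemma ket_toI (x : Idx ε) : ket L ε (toI x) = Finsupp.single x 1 := by
  have h := Vd_toI x
  unfold Vd at h
  rw [ket, dif_pos h]
  congr 1

lemma ket_of_not_Vd {a : Fin n → ℤ} (h : ¬ Vd ε a) : ket L ε a = 0 := dif_neg h

lemma kk_toI (x y : Idx ε) : kk L ε (toI x) (toI y) = Finsupp.single (x, y) 1 := by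
  have h := And.intro (Vd_toI x) (Vd_toI y)
  unfold Vd at h
  rw [kk, dif_pos h]
  congr 1

lemma kk_of_not_Vd {a b : Fin n → ℤ} (h : ¬ (Vd ε a ∧ Vd ε b)) : kk L ε a b = 0 := dif_neg h

open Classical in
lemma co_kk (a b a' b' : Fin n → ℤ) (ha : Vd ε a) (hb : Vd ε b) :
    co ε a b (kk L ε a' b') = if a' = a ∧ b' = b then 1 else 0 := by
  by_cases h : Vd ε a' ∧ Vd ε b'
  · obtain ⟨⟨x, rfl⟩, ⟨y, rfl⟩⟩ := And.intro h.1.exists_toI h.2.exists_toI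
    rw [kk_toI, co_single]
  · rw [kk_of_not_Vd h, if_neg]
    · simp
    · rintro ⟨rfl, rfl⟩
      exact h ⟨ha, hb⟩

lemma mkEnd_single {α : Type} (v : α → (α →₀ L)) (x : α) (c : L) :
    mkEnd L v (Finsupp.single x c) = c • v x := by
  simp [mkEnd]

lemma tens_ket (α β : L) (a b : Fin n → ℤ) :
    tens L (α • ket L ε a) (β • ket L ε b) = (α * β) • kk L ε a b := by
  by_cases h : Vd ε a ∧ Vd ε b
  · obtain ⟨⟨x, rfl⟩, ⟨y, rfl⟩⟩ := And.intro h.1.exists_toI h.2.exists_toI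
    rw [kk_toI, ket_toI, ket_toI, Finsupp.smul_single_one, Finsupp.smul_single_one,
      Finsupp.smul_single_one, tens, Finsupp.sum_single_index, Finsupp.sum_single_index]
    · simp
    · simp
  · rw [kk_of_not_Vd h, smul_zero]
    rcases not_and_or.mp h with h | h
    · rw [ket_of_not_Vd h, smul_zero]
      exact Finsupp.sum_zero_index
    · rw [ket_of_not_Vd h, smul_zero]
      exact Finsupp.sum_fun_zero _

/-- The eigenvalue on `|a⟩` of the Cartan generator attached to the consecutive sites `p`, `r`. -/
def kap (q : ℂ) (ε : Fin n → Bool) (p r : Fin n) (a : Fin n → ℤ) : ℂ :=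
  qc q ε p ^ (-a p) * qc q ε r ^ a r

lemma qc_ne_zero {q : ℂ} (hq0 : q ≠ 0) (ε : Fin n → Bool) (p : ℕ) : qc q ε p ≠ 0 := by
  unfold qc
  split_ifs <;> simp [hq0]

lemma kap_ne_zero {q : ℂ} (hq0 : q ≠ 0) (p r : Fin n) (a : Fin n → ℤ) : kap q ε p r a ≠ 0 :=
  mul_ne_zero (zpow_ne_zero _ (qc_ne_zero hq0 _ _)) (zpow_ne_zero _ (qc_ne_zero hq0 _ _))

lemma kap_add {q : ℂ} (hq0 : q ≠ 0) (p r : Fin n) (a b : Fin n → ℤ) :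
    kap q ε p r (a + b) = kap q ε p r a * kap q ε p r b := by
  simp only [kap, Pi.add_apply, neg_add, zpow_add₀ (qc_ne_zero hq0 ε _)]
  ring

/-- The hypothesis records that `p` is the cyclic predecessor of `r`. -/
lemma kA_single (q : ℂ) (ι : ℂ →+* L) (p r : Fin n) (h : ((r : ℕ) + n - 1) % n = p)
    (x : Idx ε) :
    kA q ι ε 1 r (Finsupp.single x 1) = ι (kap q ε p r (toI x)) • ket L ε (toI x) := by
  rw [kA, mkEnd_single, one_smul, h, ket_toI]
  simp [kap, av, toI]

lemma eA_single (q : ℂ) (ι : ℂ →+* L) (x : L) (p r : Fin n) (h : (p : ℕ) + 1 = r)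
    (z : Idx ε) :
    eA q ι ε x r (Finsupp.single z 1) =
      ι (qnum q (z.1 p)) • ket L ε (toI z - dlt p + dlt r) := by
  have h2 : ((r : ℕ) + n - 1) % n = p := by
    have : (r : ℕ) + n - 1 = p + n := by omega
    rw [this, Nat.add_mod_right, Nat.mod_eq_of_lt p.2]
  rw [eA, mkEnd_single, one_smul, h2, if_neg (by omega)]
  simp only [pow_zero, one_mul, av, p.2, dif_pos]
  rfl

/-- `Δ(k_r)` is diagonal, and its eigenvalue depends only on the total label `a + b`. -/
lemma co_dK {q : ℂ} (hq0 : q ≠ 0) (ι : ℂ →+* L) (p r : Fin n) (h : ((r : ℕ) + n - 1) % n = p)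
    (v : WW L ε) (a b : Fin n → ℤ) :
    co ε a b (dK q ι ε 1 r v) = ι (kap q ε p r (a + b)) * co ε a b v := by
  classical
  induction v using Finsupp.induction_linear with
  | zero => simp
  | add f g hf hg => simp only [map_add, hf, hg, mul_add]
  | single z c =>
    rw [dK, opT, mkEnd_single, kA_single q ι p r h, kA_single q ι p r h, tens_ket, map_smul,
      map_smul, co_single]
    by_cases hab : toI z.1 = a ∧ toI z.2 = b
    · obtain ⟨rfl, rfl⟩ := hab
      rw [co_kk _ _ _ _ (Vd_toI _) (Vd_toI _)]
      simp [kap_add hq0]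
      ring
    · by_cases hv : Vd ε a ∧ Vd ε b
      · rw [co_kk _ _ _ _ hv.1 hv.2, if_neg hab, if_neg hab]
        simp
      · rw [if_neg hab]
        have : co ε a b (kk L ε (toI z.1) (toI z.2)) = 0 := by
          by_contra h0
          exact hv (co_Vd h0)
        simp [this]

lemma qnum_one {q : ℂ} (h : q - q⁻¹ ≠ 0) : qnum q 1 = 1 := by
  simp [qnum, h]

/-- The raising operator in coordinates: its coefficient at `(a, b)` only involves the two labels with
one particle fewer at `r` and one more at `p = r - 1`, in either factor. Since site `p` is fermionic, the
moved particle is alone there and contributes `[1] = 1`. -/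
lemma co_dE {q : ℂ} (hqq : q - q⁻¹ ≠ 0) (ι : ℂ →+* L) (x y : L) (p r : Fin n)
    (h : (p : ℕ) + 1 = r) (hp : ε p = true) (v : WW L ε) (a b : Fin n → ℤ)
    (ha : Vd ε a) (hb : Vd ε b) :
    co ε a b (dE q ι ε x y r v) = co ε a (b + dlt p - dlt r) v +
      ι (kap q ε p r b) * co ε (a + dlt p - dlt r) b v := by
  classical
  have h2 : ((r : ℕ) + n - 1) % n = p := by
    have : (r : ℕ) + n - 1 = p + n := by omega
    rw [this, Nat.add_mod_right, Nat.mod_eq_of_lt p.2]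
  have hrp : r ≠ p := by
    rintro rfl
    omega
  have key : ∀ (z : Idx ε) (c : Fin n → ℤ), Vd ε c → toI z = c + dlt p - dlt r → z.1 p = 1 := by
    intro z c hc hz
    have h1 := congrFun hz p
    have h3 := z.2 p hp
    have h4 := hc.1 p
    have h5 : ¬ ((p : ℕ) = r) := by omega
    simp [toI, dlt, h5] at h1
    omega
  induction v using Finsupp.induction_linear with
  | zero => simp
  | add f g hf hg => simp only [map_add, hf, hg]; ring
  | single z c =>
    rw [dE, LinearMap.add_apply, opT, mkEnd_single, opT, mkEnd_single, LinearMap.id_apply,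
      kA_single q ι p r h2, eA_single q ι _ p r h, eA_single q ι _ p r h, tens_ket,
      ← ket_toI, ← one_smul L (ket L ε (toI z.1)), tens_ket, map_add, map_smul, map_smul,
      map_smul, map_smul, co_kk _ _ _ _ ha hb, co_kk _ _ _ _ ha hb, co_single, co_single]
    have e1 : ∀ u w : Fin n → ℤ, u - dlt p + dlt r = w ↔ u = w + dlt p - dlt r := by
      intro u w
      constructor
      · rintro rfl; abel
      · rintro rfl; abel
    simp only [e1]
    congr 1
    · split_ifs with h3
      · rw [key _ _ hb h3.2]
        simp [qnum_one hqq]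
      · simp
    · split_ifs with h3
      · rw [key _ _ ha h3.1, h3.2]
        simp [qnum_one hqq, mul_comm]
      · simp

end

/-! ### Supports closed under moving particles -/

section
variable {L : Type} [Field L] {n : ℕ} {ε : Fin n → Bool}

lemma Vd_iff (hε : ∀ t : Fin n, ε t = true ↔ (t : ℕ) < n - 1) (a : Fin n → ℤ) :
    Vd ε a ↔ ∀ t : Fin n, 0 ≤ a t ∧ ((t : ℕ) < n - 1 → a t ≤ 1) := by
  simp only [Vd, Ok, hε, Int.toNat_le, Nat.cast_one, forall_and]

lemma dlt_apply (p t : Fin n) : dlt (p : ℕ) t = if t = p then 1 else 0 := by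
  simp [dlt, Fin.ext_iff]

lemma sum_dlt (p : Fin n) (f : Fin n → ℤ) : ∑ t, dlt (p : ℕ) t * f t = f p := by
  simp [dlt_apply]

/-- If a set `S` of pairs of labels allows every admissible rightward move of a particle in the second
factor (compensated by the opposite move in the first), then all particles of the second factor can be
pushed to the last, bosonic site. The sum `∑ b_t (n - 1 - t)` bounds the number of remaining moves. -/
lemma clear (hε : ∀ t : Fin n, ε t = true ↔ (t : ℕ) < n - 1)
    (S : (Fin n → ℤ) → (Fin n → ℤ) → Prop)
    (hv : ∀ a b, S a b → Vd ε b)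
    (hmv : ∀ p r : Fin n, (p : ℕ) + 1 = r → ∀ a b, S a b → Vd ε (b - dlt p + dlt r) →
      S (a + dlt p - dlt r) (b - dlt p + dlt r))
    (k : ℕ) : ∀ a b, S a b → ∑ t : Fin n, b t * ((n : ℤ) - 1 - t) ≤ k →
      ∃ a' b', S a' b' ∧ a' + b' = a + b ∧ ∀ t : Fin n, (t : ℕ) < n - 1 → b' t = 0 := by
  induction k with
  | zero =>
    intro a b hab hk
    refine ⟨a, b, hab, rfl, ?_⟩
    have hb := (Vd_iff hε b).1 (hv _ _ hab)
    have hnn : ∀ t ∈ Finset.univ, 0 ≤ b t * ((n : ℤ) - 1 - t) := by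
      intro t _
      have := t.2
      exact mul_nonneg (hb t).1 (by omega)
    have h0 := (Finset.sum_eq_zero_iff_of_nonneg hnn).1
      (le_antisymm (by simpa using hk) (Finset.sum_nonneg hnn))
    intro t ht
    rcases mul_eq_zero.1 (h0 t (Finset.mem_univ t)) with h | h
    · exact h
    · omega
  | succ k ih =>
    intro a b hab hk
    have hb := (Vd_iff hε b).1 (hv _ _ hab)
    by_cases hz : ∀ t : Fin n, (t : ℕ) < n - 1 → b t = 0
    · exact ⟨a, b, hab, rfl, hz⟩
    push Not at hz
    let T : Finset (Fin n) := Finset.univ.filter fun t => (t : ℕ) < n - 1 ∧ b t ≠ 0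
    have hT : T.Nonempty := by
      obtain ⟨t, ht⟩ := hz
      exact ⟨t, by simpa [T] using ht⟩
    obtain ⟨p, hpe⟩ : ∃ p, p = T.max' hT := ⟨_, rfl⟩
    have hpT : (p : ℕ) < n - 1 ∧ b p ≠ 0 := by
      have := T.max'_mem hT
      rw [← hpe] at this
      simpa [T] using this
    have hr : (p : ℕ) + 1 < n := by omega
    obtain ⟨r, hre⟩ : ∃ r : Fin n, (p : ℕ) + 1 = r := ⟨⟨p + 1, hr⟩, rfl⟩
    have hbr : (r : ℕ) < n - 1 → b r = 0 := by
      intro h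
      by_contra h0
      have : r ≤ T.max' hT := T.le_max' _ (by simpa [T] using ⟨h, h0⟩)
      rw [← hpe, Fin.le_def] at this
      omega
    have hV : Vd ε (b - dlt p + dlt r) := by
      rw [Vd_iff hε]
      intro t
      have h1 := hb t
      simp only [Pi.add_apply, Pi.sub_apply, dlt_apply]
      have hpr : p ≠ r := by rintro rfl; omega
      split_ifs with h2 h3 h3
      · exact absurd (h2.symm.trans h3) hpr
      · subst h2
        have := hpT.2
        omega
      · subst h3
        have := hbr
        omega
      · omega
    obtain ⟨a', b', h1, h2, h3⟩ := ih _ _ (hmv p r hre a b hab hV) (by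
      simp only [Pi.add_apply, Pi.sub_apply, add_mul, sub_mul, Finset.sum_add_distrib,
        Finset.sum_sub_distrib, sum_dlt] at hk ⊢
      push_cast at hk
      have : ((p : ℕ) : ℤ) + 1 = (r : ℕ) := by exact_mod_cast hre
      linarith)
    exact ⟨a', b', h1, by rw [h2]; abel, h3⟩

/-- If `S` allows every admissible rightward move in either factor, compensated by the opposite move in
the other, then the total fermionic occupation of a member of `S` is `(0, …, 0, 1, …, 1)`: the
compensating move requires site `p` to be empty in the other factor, and `r` to be occupied there. -/
lemma shape (hε : ∀ t : Fin n, ε t = true ↔ (t : ℕ) < n - 1)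
    (S : (Fin n → ℤ) → (Fin n → ℤ) → Prop)
    (hv : ∀ a b, S a b → Vd ε a ∧ Vd ε b)
    (hm1 : ∀ p r : Fin n, (p : ℕ) + 1 = r → ∀ a b, S a b → Vd ε (b - dlt p + dlt r) →
      S (a + dlt p - dlt r) (b - dlt p + dlt r))
    (hm2 : ∀ p r : Fin n, (p : ℕ) + 1 = r → ∀ a b, S a b → Vd ε (a - dlt p + dlt r) →
      S (a - dlt p + dlt r) (b + dlt p - dlt r))
    (a b : Fin n → ℤ) (hab : S a b) :
    ∃ s : ℕ, s ≤ n - 1 ∧ ∀ t : Fin n, (t : ℕ) < n - 1 →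
      a t + b t = if (t : ℕ) < n - 1 - s then 0 else 1 := by
  have ha := (Vd_iff hε a).1 (hv _ _ hab).1
  have hb := (Vd_iff hε b).1 (hv _ _ hab).2
  -- a rightward move is admissible as soon as the target site has room
  have aux : ∀ (c : Fin n → ℤ), (∀ t : Fin n, 0 ≤ c t ∧ ((t : ℕ) < n - 1 → c t ≤ 1)) →
      ∀ p r : Fin n, (p : ℕ) + 1 = r → c p = 1 → ((r : ℕ) < n - 1 → c r = 0) →
      Vd ε (c - dlt p + dlt r) := by
    intro c hc p r hpr h1 h2
    rw [Vd_iff hε]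
    intro t
    have h3 := hc t
    have hne : p ≠ r := by rintro rfl; omega
    simp only [Pi.add_apply, Pi.sub_apply, dlt_apply]
    split_ifs with h4 h5 h5
    · exact absurd (h4.symm.trans h5) hne
    · subst h4; omega
    · subst h5; omega
    · omega
  -- the compensating leftward move requires an empty site `p` and an occupied site `r`
  have room : ∀ (c : Fin n → ℤ) (p r : Fin n), (p : ℕ) + 1 = r → Vd ε (c + dlt p - dlt r) →
      c p ≤ 0 ∧ 1 ≤ c r := by
    intro c p r hpr h
    rw [Vd_iff hε] at h
    have h1 := h p
    have h2 := h r
    have h3 := r.2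
    have hne : p ≠ r := by rintro rfl; omega
    simp [dlt_apply, hne, hne.symm] at h1 h2
    omega
  have step : ∀ p r : Fin n, (p : ℕ) + 1 = r →
      a p + b p ≤ if (r : ℕ) < n - 1 then a r + b r else 1 := by
    intro p r hpr
    have h1 := ha p
    have h2 := hb p
    have h3 := ha r
    have h4 := hb r
    have h5 := r.2
    by_cases hA : a p = 1 ∧ ((r : ℕ) < n - 1 → a r = 0)
    · have := room _ _ _ hpr (hv _ _ (hm2 p r hpr a b hab (aux a ha p r hpr hA.1 hA.2))).2
      split_ifs <;> omega
    by_cases hB : b p = 1 ∧ ((r : ℕ) < n - 1 → b r = 0)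
    · have := room _ _ _ hpr (hv _ _ (hm1 p r hpr a b hab (aux b hb p r hpr hB.1 hB.2))).1
      split_ifs <;> omega
    split_ifs <;> omega
  have le1 : ∀ k : ℕ, ∀ t : Fin n, (t : ℕ) < n - 1 → n - 1 - t ≤ k → a t + b t ≤ 1 := by
    intro k
    induction k with
    | zero => intro t h1 h2; omega
    | succ k ih =>
      intro t h1 h2
      have h3 := step t ⟨t + 1, by omega⟩ rfl
      split_ifs at h3 with h
      · exact h3.trans (ih _ h (by simp only; omega))
      · exact h3
  have mono : ∀ k : ℕ, ∀ t u : Fin n, (u : ℕ) < n - 1 → (t : ℕ) + k = u →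
      a t + b t ≤ a u + b u := by
    intro k
    induction k with
    | zero =>
      intro t u h1 h2
      have : t = u := Fin.ext (by omega)
      rw [this]
    | succ k ih =>
      intro t u h1 h2
      have h3 := u.2
      have h4 := step t ⟨t + 1, by omega⟩ rfl
      rw [if_pos (by simp only; omega)] at h4
      exact h4.trans (ih _ u h1 (by simp only; omega))
  classical
  -- `n - 1 - s` is the first fermionic position carrying a particle
  have hex : ∃ k : ℕ, ∀ t : Fin n, (t : ℕ) < n - 1 → k ≤ t → a t + b t = 1 :=
    ⟨n, fun t h1 h2 => by omega⟩
  have hk := Nat.find_spec hex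
  have hkl : Nat.find hex ≤ n - 1 := Nat.find_min' hex (fun t h1 h2 => by omega)
  refine ⟨n - 1 - Nat.find hex, by omega, fun t ht => ?_⟩
  have e : n - 1 - (n - 1 - Nat.find hex) = Nat.find hex := by omega
  rw [e]
  split_ifs with h
  · by_contra h0
    have h1 := ha t
    have h2 := hb t
    refine Nat.find_min hex h (fun u hu htu => ?_)
    have h3 := mono (u - t) t u hu (by omega)
    have h4 := le1 _ u hu le_rfl
    omega
  · exact hk t ht (by omega)

end

/-! ### Base pairs determine a killed vector -/

section
variable {L : Type} [Field L] {n : ℕ} {ε : Fin n → Bool}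

lemma sum_of_mem {l m : ℕ} {v : WW L ε} (hv : v ∈ WWlm L ε l m) {a b : Fin n → ℤ}
    (h : co ε a b v ≠ 0) : ∑ t, a t = l ∧ ∑ t, b t = m := by
  classical
  induction hv using Submodule.span_induction with
  | mem v hv =>
    obtain ⟨p, h1, h2, rfl⟩ := hv
    rw [co_single] at h
    have h3 := of_not_not (fun hn => h (if_neg hn))
    rw [← h3.1, ← h3.2, ← h1, ← h2]
    simp [toI]
  | zero => simp at h
  | add v w _ _ hv hw =>
    by_cases h1 : co ε a b v = 0
    · exact hw (by simpa [h1] using h)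
    · exact hv h1
  | smul c v _ hv =>
    refine hv fun h1 => h ?_
    rw [map_smul, h1, smul_zero]

lemma mem_of_sum {l m : ℕ} {v : WW L ε}
    (h : ∀ a b, co ε a b v ≠ 0 → ∑ t, a t = l ∧ ∑ t, b t = m) : v ∈ WWlm L ε l m := by
  rw [← Finsupp.sum_single v]
  refine Submodule.sum_mem _ fun z hz => ?_
  rw [← Finsupp.smul_single_one]
  refine Submodule.smul_mem _ _ (Submodule.subset_span ⟨z, ?_, ?_, rfl⟩)
  all_goals
    have h1 := h (toI z.1) (toI z.2) (by rw [co_toI]; simpa using hz)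
    simp only [toI] at h1
  · exact_mod_cast h1.1
  · exact_mod_cast h1.2

lemma sum_win {k s : ℕ} (hn : 1 ≤ n) (hk : k + s = n - 1) (g : ℕ → ℤ) (x : ℤ) :
    ∑ t : Fin n, (if (t : ℕ) < k then 0 else if (t : ℕ) < n - 1 then g (t - k) else x) =
      ∑ p ∈ Finset.range s, g p + x := by
  obtain ⟨N, rfl⟩ : ∃ N, n = N + 1 := ⟨n - 1, by omega⟩
  simp only [Nat.add_sub_cancel] at hk ⊢
  subst hk
  rw [Fin.sum_univ_castSucc]
  congr 1
  · simp only [Fin.val_castSucc]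
    rw [Fin.sum_univ_eq_sum_range (fun t => if t < k then 0 else if t < k + s then g (t - k) else x),
      Finset.sum_range_add, Finset.sum_eq_zero, zero_add]
    · refine Finset.sum_congr rfl fun p hp => ?_
      rw [if_neg (by omega), if_pos (by simpa using hp)]
      simp
    · intro t ht
      rw [if_pos (by simpa using ht)]
  · simp

/-- The label `|0^{n-1-s}, 1^s, l-s⟩`. -/
def baseA (n l s : ℕ) : Fin n → ℤ := fun t =>
  if (t : ℕ) < n - 1 - s then 0 else if (t : ℕ) < n - 1 then 1 else (l : ℤ) - s

/-- The label `|0^{n-1}, m⟩`. -/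
def baseB (n m : ℕ) : Fin n → ℤ := fun t => if (t : ℕ) < n - 1 then 0 else (m : ℤ)

/-- A fermionic column filling and the total weight determine the bosonic occupation. -/
lemma eq_baseA (hn : 1 ≤ n) {l s : ℕ} (hs : s ≤ n - 1) {a : Fin n → ℤ}
    (h : ∀ t : Fin n, (t : ℕ) < n - 1 → a t = if (t : ℕ) < n - 1 - s then 0 else 1)
    (hl : ∑ t, a t = l) : a = baseA n l s := by
  have hlast : a = fun t : Fin n => if (t : ℕ) < n - 1 - s then 0 else
      if (t : ℕ) < n - 1 then 1 else a ⟨n - 1, by omega⟩ := by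
    funext t
    by_cases ht : (t : ℕ) < n - 1
    · rw [h t ht]
      simp [ht]
    · have : (⟨n - 1, by omega⟩ : Fin n) = t := Fin.ext (by simp only; omega)
      rw [this, if_neg (by omega), if_neg ht]
  rw [hlast, sum_win (s := s) hn (by omega) (fun _ => 1)] at hl
  rw [hlast]
  funext t
  simp only [baseA]
  simp at hl
  congr 2
  linarith

lemma eq_baseB (hn : 1 ≤ n) {m : ℕ} {b : Fin n → ℤ}
    (h : ∀ t : Fin n, (t : ℕ) < n - 1 → b t = 0)
    (hm : ∑ t, b t = m) : b = baseB n m := by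
  rw [eq_baseA hn (Nat.zero_le _) (s := 0) (fun t ht => by simp [h t ht, ht]) hm]
  funext t
  simp only [baseA, baseB, Nat.sub_zero]
  split_ifs <;> simp

/-- A killed vector of `𝒲_l ⊗ 𝒲_m` is determined by its coefficients at the pairs
`(baseA n l s, baseB n m)` with `s ≤ min (n - 1) (min l m)`. -/
lemma eq_zero_of_killed {q : ℂ} (hq0 : q ≠ 0) (hqq : q - q⁻¹ ≠ 0) (ι : ℂ →+* L) (x y : L)
    (hn : 1 ≤ n) (hε : ∀ t : Fin n, ε t = true ↔ (t : ℕ) < n - 1) {l m : ℕ} (v : WW L ε)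
    (hv : v ∈ WWlm L ε l m) (hE : ∀ i : Fin n, (i : ℕ) ≠ 0 → dE q ι ε x y i v = 0)
    (hbase : ∀ s ≤ min (n - 1) (min l m), co ε (baseA n l s) (baseB n m) v = 0) : v = 0 := by
  have hκ : ∀ p r : Fin n, ∀ b, ι (kap q ε p r b) ≠ 0 := fun p r b =>
    (map_ne_zero ι).2 (kap_ne_zero hq0 p r b)
  have heq : ∀ p r : Fin n, (p : ℕ) + 1 = r → ∀ a b, Vd ε a → Vd ε b →
      co ε a (b + dlt p - dlt r) v + ι (kap q ε p r b) * co ε (a + dlt p - dlt r) b v = 0 := by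
    intro p r hpr a b ha hb
    rw [← co_dE hqq ι x y p r hpr ((hε p).2 (by omega)) v a b ha hb, hE r (by omega), map_zero]
  have hm1 : ∀ p r : Fin n, (p : ℕ) + 1 = r → ∀ a b, co ε a b v ≠ 0 →
      Vd ε (b - dlt p + dlt r) → co ε (a + dlt p - dlt r) (b - dlt p + dlt r) v ≠ 0 := by
    intro p r hpr a b hab hV h0
    have := heq p r hpr a _ (co_Vd hab).1 hV
    rw [h0, mul_zero, add_zero] at this
    exact hab (by rwa [show b - dlt (p : ℕ) + dlt r + dlt p - dlt r = b by abel] at this)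
  have hm2 : ∀ p r : Fin n, (p : ℕ) + 1 = r → ∀ a b, co ε a b v ≠ 0 →
      Vd ε (a - dlt p + dlt r) → co ε (a - dlt p + dlt r) (b + dlt p - dlt r) v ≠ 0 := by
    intro p r hpr a b hab hV h0
    have := heq p r hpr _ b hV (co_Vd hab).2
    rw [h0, zero_add, show a - dlt (p : ℕ) + dlt r + dlt p - dlt r = a by abel] at this
    exact hab ((mul_eq_zero.1 this).resolve_left (hκ p r b))
  refine co_ext fun a b _ _ => ?_
  rw [map_zero]
  by_contra hab
  obtain ⟨s, hsn, hs⟩ := shape hε (fun a b => co ε a b v ≠ 0) (fun a b h => co_Vd h) hm1 hm2 a b hab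
  obtain ⟨a₁, b₁, h1, h2, h3⟩ := clear hε (fun a b => co ε a b v ≠ 0) (fun a b h => (co_Vd h).2) hm1
    _ a b hab (Int.self_le_toNat _)
  obtain ⟨b₂, a₂, g1, g2, g3⟩ := clear hε (fun b a => co ε a b v ≠ 0) (fun b a h => (co_Vd h).1)
    (fun p r hpr a b h hV => hm2 p r hpr b a h hV)
    _ b a hab (Int.self_le_toNat _)
  -- clearing the second factor gives `s ≤ l`, clearing the first one gives `s ≤ m`
  have hA : a₁ = baseA n l s := by
    refine eq_baseA hn hsn (fun t ht => ?_) (sum_of_mem hv h1).1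
    rw [← hs t ht, ← Pi.add_apply a b, ← h2, Pi.add_apply, h3 t ht, add_zero]
  have hB : b₂ = baseA n m s := by
    refine eq_baseA hn hsn (fun t ht => ?_) (sum_of_mem hv g1).2
    rw [← hs t ht, ← Pi.add_apply a b, add_comm a b, ← g2, Pi.add_apply, g3 t ht, add_zero]
  have hlast : ∀ k : ℕ, Vd ε (baseA n k s) → s ≤ k := by
    intro k hk
    have := hk.1 ⟨n - 1, by omega⟩
    simp only [baseA] at this
    rw [if_neg (by omega), if_neg (by omega)] at this
    omega
  have hsl := hlast l (hA ▸ (co_Vd h1).1)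
  have hsm := hlast m (hB ▸ (co_Vd g1).2)
  refine h1 ?_
  rw [hA, eq_baseB hn h3 (sum_of_mem hv h1).2]
  exact hbase s (by simp [hsn, hsl, hsm])

end

/-! ### The coefficients of `ξ_s` -/

section
variable {L : Type} [Field L] {n : ℕ} {ε : Fin n → Bool}

/-- The number of particles at the fermionic sites. -/
def fsum (a : Fin n → ℤ) : ℤ := ∑ t : Fin n, if (t : ℕ) < n - 1 then a t else 0

/-- The bilinear form `∑ a_u b_t` over `u < t < n - 1`. On complementary `0`-`1` sequences it is the number
`inv` of inversions, and unlike `inv` it behaves well under moves. -/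
def finv (a b : Fin n → ℤ) : ℤ :=
  ∑ u : Fin n, ∑ t : Fin n, if u < t ∧ (t : ℕ) < n - 1 then a u * b t else 0

/-- The coefficient of `|a⟩ ⊗ |b⟩` in `ξ_s`, the summation index `j` being `fsum b`. -/
def xiCoeff (q : ℂ) (m s : ℕ) (a b : Fin n → ℤ) : ℂ :=
  (-1) ^ fsum b * q ^ (fsum b * ((m : ℤ) - s + 1) + finv a b)

/-- The pairs of labels occurring in `ξ_s^{l,m}`. -/
structure Good (ε : Fin n → Bool) (l m s : ℕ) (a b : Fin n → ℤ) : Prop where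
  va : Vd ε a
  vb : Vd ε b
  col : ∀ t : Fin n, (t : ℕ) < n - 1 → a t + b t = if (t : ℕ) < n - 1 - s then 0 else 1
  suma : ∑ t, a t = l
  sumb : ∑ t, b t = m

lemma sum_eq_fsum_add_last (r : Fin n) (hr : (r : ℕ) = n - 1) (a : Fin n → ℤ) :
    ∑ t, a t = fsum a + a r := by
  have h : ∀ t : Fin n, a t = (if (t : ℕ) < n - 1 then a t else 0) + if t = r then a t else 0 := by
    intro t
    have := t.2
    by_cases ht : t = r
    · subst ht
      simp [hr]
    · have h2 : (t : ℕ) ≠ r := fun h => ht (Fin.ext h)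
      rw [if_pos (by omega), if_neg ht, add_zero]
  rw [Finset.sum_congr rfl fun t _ => h t, Finset.sum_add_distrib]
  simp [fsum]

lemma Good.fsum_add (hn : 1 ≤ n) {l m s : ℕ} (hs : s ≤ n - 1) {a b : Fin n → ℤ}
    (h : Good ε l m s a b) : fsum a + fsum b = s := by
  have h1 := sum_win (n := n) (k := n - 1 - s) (s := s) hn (by omega) (fun _ => 1) 0
  simp only [Finset.sum_const, Finset.card_range, nsmul_eq_mul, mul_one, add_zero] at h1
  rw [← h1, fsum, fsum, ← Finset.sum_add_distrib]
  refine Finset.sum_congr rfl fun t _ => ?_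
  by_cases ht : (t : ℕ) < n - 1
  · simp only [ht, if_true, h.col t ht]
  · simp [ht]

lemma fsum_nonneg {a : Fin n → ℤ} (h : Vd ε a) : 0 ≤ fsum a :=
  Finset.sum_nonneg fun t _ => by split_ifs; exacts [h.1 t, le_rfl]

lemma fsum_winA1 {s : ℕ} (hn : 1 ≤ n) (hs : s ≤ n - 1) (iv : ℕ → ℕ) (z : ℤ) :
    fsum (winA1 n s iv z) = ∑ p ∈ Finset.range s, (iv p : ℤ) := by
  have := sum_win (n := n) (k := n - s - 1) (s := s) hn (by omega) (fun p => (iv p : ℤ)) 0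
  rw [add_zero] at this
  rw [← this]
  refine Finset.sum_congr rfl fun t _ => ?_
  simp only [winA1]
  split_ifs <;> rfl

lemma sum_winA1 {s : ℕ} (hn : 1 ≤ n) (hs : s ≤ n - 1) (iv : ℕ → ℕ) (z : ℤ) :
    ∑ t, winA1 n s iv z t = ∑ p ∈ Finset.range s, (iv p : ℤ) + z :=
  sum_win (n := n) (k := n - s - 1) (s := s) hn (by omega) (fun p => (iv p : ℤ)) z

/-- On the labels of a summand of `ξ_s`, the form `finv` is the inversion number. -/
lemma finv_winA1 {s : ℕ} (hn : 1 ≤ n) (hs : s ≤ n - 1) (iv : ℕ → ℕ) (hiv : ∀ p, iv p ≤ 1)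
    (z z' : ℤ) :
    finv (winA1 n s iv z) (winA1 n s (fun p => 1 - iv p) z') = invv s iv := by
  let g : ℕ → ℤ := fun u => ∑ r ∈ Finset.range s, if u < r then (iv u : ℤ) * (1 - iv r) else 0
  have h1 := sum_win (n := n) (k := n - s - 1) (s := s) hn (by omega) g 0
  have h2 : ((invv s iv : ℕ) : ℤ) = ∑ u ∈ Finset.range s, g u := by
    simp only [invv, g]
    push_cast
    refine Finset.sum_congr rfl fun u _ => Finset.sum_congr rfl fun r _ => ?_
    rw [Nat.cast_sub (hiv r)]
    simp
  rw [h2, ← add_zero (∑ u ∈ Finset.range s, g u), ← h1]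
  refine Finset.sum_congr rfl fun u _ => ?_
  split_ifs with hu hu'
  · refine Finset.sum_eq_zero fun t _ => ?_
    rw [winA1, if_pos hu]
    simp
  · have h3 := sum_win (n := n) (k := n - s - 1) (s := s) hn (by omega)
      (fun r => if (u : ℕ) - (n - s - 1) < r then
        (iv (u - (n - s - 1)) : ℤ) * (1 - iv r) else 0) 0
    rw [add_zero] at h3
    simp only [g]
    rw [← h3]
    refine Finset.sum_congr rfl fun t _ => ?_
    by_cases ht : (t : ℕ) < n - s - 1
    · rw [if_pos ht, if_neg]
      intro h
      have := Fin.lt_def.1 h.1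
      omega
    · rw [if_neg ht]
      by_cases ht' : (t : ℕ) < n - 1
      · rw [if_pos ht']
        have e : (u < t ∧ (t : ℕ) < n - 1) ↔ (u : ℕ) - (n - s - 1) < t - (n - s - 1) := by
          rw [Fin.lt_def]
          omega
        refine if_congr e ?_ rfl
        simp only [winA1]
        rw [if_neg hu, if_pos hu', if_neg ht, if_pos ht', Nat.cast_sub (hiv _)]
        simp
      · rw [if_neg ht', if_neg (fun h => ht' h.2)]
  · refine Finset.sum_eq_zero fun t _ => if_neg fun h => ?_
    have := Fin.lt_def.1 h.1
    omega

lemma sum_ivf {s : ℕ} (i : Fin s → ℕ) : ∑ p ∈ Finset.range s, ivf i p = ∑ u, i u := by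
  rw [Finset.sum_range]
  simp [ivf]

lemma ivf_le {s : ℕ} {i : Fin s → ℕ} (hi : ∀ u, i u ≤ 1) (p : ℕ) : ivf i p ≤ 1 := by
  unfold ivf
  split_ifs
  · exact hi _
  · omega

lemma sum_one_sub {s j : ℕ} (hj : j ≤ s) (iv : ℕ → ℕ) (hiv : ∀ p, iv p ≤ 1)
    (h : ∑ p ∈ Finset.range s, iv p = s - j) :
    ∑ p ∈ Finset.range s, ((1 - iv p : ℕ) : ℤ) = j := by
  have h2 : ∑ p ∈ Finset.range s, (iv p : ℤ) = s - j := by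
    rw [← Nat.cast_sum, h, Nat.cast_sub hj]
  have h3 : ∀ p ∈ Finset.range s, ((1 - iv p : ℕ) : ℤ) = 1 - iv p := fun p _ => by
    rw [Nat.cast_sub (hiv p)]
    simp
  rw [Finset.sum_congr rfl h3, Finset.sum_sub_distrib, h2]
  simp

lemma xiCoeff_win (q : ℂ) {m s j : ℕ} (hn : 1 ≤ n) (hs : s ≤ n - 1) (hsm : s ≤ m) (hj : j ≤ s)
    (iv : ℕ → ℕ) (hiv : ∀ p, iv p ≤ 1) (h : ∑ p ∈ Finset.range s, iv p = s - j) (z z' : ℤ)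
    (hq0 : q ≠ 0) :
    xiCoeff q m s (winA1 n s iv z) (winA1 n s (fun p => 1 - iv p) z') =
      (-1 : ℂ) ^ j * q ^ (j * (m - s + 1)) * q ^ invv s iv := by
  rw [xiCoeff, fsum_winA1 hn hs, sum_one_sub hj iv hiv h, finv_winA1 hn hs iv hiv,
    zpow_add₀ hq0, zpow_natCast, mul_assoc, ← zpow_natCast q (j * (m - s + 1)),
    zpow_natCast q (invv s iv)]
  push_cast [Nat.cast_sub hsm]
  rfl

lemma good_win (hε : ∀ t : Fin n, ε t = true ↔ (t : ℕ) < n - 1) {l m s j : ℕ} (hn : 1 ≤ n)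
    (hs : s ≤ n - 1) (hj : j ≤ s) (hsl : s ≤ l) (hsm : s ≤ m)
    (iv : ℕ → ℕ) (hiv : ∀ p, iv p ≤ 1) (h : ∑ p ∈ Finset.range s, iv p = s - j) :
    Good ε l m s (winA1 n s iv ((l : ℤ) + j - s))
      (winA1 n s (fun p => 1 - iv p) ((m : ℤ) - j)) := by
  have hV : ∀ (iv : ℕ → ℕ) (z : ℤ), (∀ p, iv p ≤ 1) → 0 ≤ z → Vd ε (winA1 n s iv z) := by
    intro iv z hiv hz
    rw [Vd_iff hε]
    intro t
    simp only [winA1]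
    have := hiv (t - (n - s - 1))
    split_ifs <;> omega
  refine ⟨hV _ _ hiv (by omega), hV _ _ (fun p => Nat.sub_le _ _) (by omega), ?_, ?_, ?_⟩
  · intro t ht
    have := hiv (t - (n - s - 1))
    simp only [winA1]
    split_ifs <;> omega
  · rw [sum_winA1 hn hs, ← Nat.cast_sum, h, Nat.cast_sub hj]
    ring
  · rw [sum_winA1 hn hs, sum_one_sub hj iv hiv h]
    ring

/-- The labels of a `Good` pair are those of one summand of `ξ_s`. -/
lemma Good.exists_win (hε : ∀ t : Fin n, ε t = true ↔ (t : ℕ) < n - 1) {l m s : ℕ} (hn : 1 ≤ n)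
    (hs : s ≤ n - 1) {a b : Fin n → ℤ} (h : Good ε l m s a b) :
    ∃ j ≤ s, ∃ i : Fin s → ℕ, (∀ u, i u ≤ 1) ∧ ∑ u, i u = s - j ∧
      winA1 n s (ivf i) ((l : ℤ) + j - s) = a ∧
      winA1 n s (fun p => 1 - ivf i p) ((m : ℤ) - j) = b := by
  have hva := (Vd_iff hε a).1 h.va
  have hvb := (Vd_iff hε b).1 h.vb
  have hJ := h.fsum_add hn hs
  have hA := fsum_nonneg h.va
  obtain ⟨j, hj⟩ := Int.eq_ofNat_of_zero_le (fsum_nonneg h.vb)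
  let r : Fin n := ⟨n - 1, by omega⟩
  have hla := sum_eq_fsum_add_last r rfl a
  have hlb := sum_eq_fsum_add_last r rfl b
  rw [h.suma] at hla
  rw [h.sumb] at hlb
  have hjs : j ≤ s := by omega
  have hr : ∀ t : Fin n, ¬ (t : ℕ) < n - 1 → t = r := fun t ht => Fin.ext (by simp [r]; omega)
  let i : Fin s → ℕ := fun u => (a ⟨n - 1 - s + u, by omega⟩).toNat
  have hi : ∀ t : Fin n, ¬ (t : ℕ) < n - s - 1 → (t : ℕ) < n - 1 →
      (ivf i (t - (n - s - 1)) : ℤ) = a t := by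
    intro t h1 h2
    have h3 : (t : ℕ) - (n - s - 1) < s := by omega
    have h4 : (⟨n - 1 - s + (t - (n - s - 1)), by omega⟩ : Fin n) = t :=
      Fin.ext (by simp only; omega)
    simp only [ivf, h3, dif_pos, i]
    rw [h4]
    exact Int.toNat_of_nonneg (hva t).1
  have hi1 : ∀ u, i u ≤ 1 := by
    intro u
    have := hva ⟨n - 1 - s + u, by omega⟩
    have h2 := this.2 (by simp only; omega)
    simp only [i]
    omega
  have ha : winA1 n s (ivf i) ((l : ℤ) + j - s) = a := by
    funext t
    have h1 := h.col t
    have h2 := hva t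
    have h3 := hvb t
    have h4 := hi t
    simp only [winA1]
    split_ifs with h5 h6
    · rw [if_pos (by omega)] at h1
      omega
    · exact h4 h5 h6
    · rw [hr t h6]
      omega
  refine ⟨j, hjs, i, hi1, ?_, ha, ?_⟩
  · have h1 := fsum_winA1 hn hs (ivf i) ((l : ℤ) + j - s)
    rw [ha, ← Nat.cast_sum, sum_ivf] at h1
    omega
  · funext t
    have h1 := h.col t
    have h2 := hva t
    have h3 := hvb t
    have h4 := hi t
    have h7 := ivf_le hi1 (t - (n - s - 1))
    simp only [winA1]
    split_ifs with h5 h6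
    · rw [if_pos (by omega)] at h1
      omega
    · rw [if_neg (by omega)] at h1
      have := h4 h5 h6
      omega
    · rw [hr t h6]
      omega

/-- Distinct summands of `ξ_s` have distinct labels. -/
lemma win_inj (hn : 1 ≤ n) {s m j j' : ℕ} (hs : s ≤ n - 1) {i i' : Fin s → ℕ} {z z' : ℤ}
    (ha : winA1 n s (ivf i) z = winA1 n s (ivf i') z')
    (hb : winA1 n s (fun p => 1 - ivf i p) ((m : ℤ) - j) =
      winA1 n s (fun p => 1 - ivf i' p) ((m : ℤ) - j')) : j = j' ∧ i = i' := by
  constructor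
  · have := congrFun hb ⟨n - 1, by omega⟩
    simp only [winA1, lt_self_iff_false, if_false] at this
    rw [if_neg (by omega), if_neg (by omega)] at this
    omega
  · funext u
    have := congrFun ha ⟨n - s - 1 + u, by omega⟩
    have h1 : ¬ n - s - 1 + (u : ℕ) < n - s - 1 := by omega
    have h2 : n - s - 1 + (u : ℕ) < n - 1 := by omega
    simp only [winA1, h1, h2, if_true, if_false] at this
    simpa [ivf] using this

open Classical in
/-- The coefficients of `ξ_s` in closed form. -/
lemma co_xi {q : ℂ} (hq0 : q ≠ 0) (ι : ℂ →+* L)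
    (hε : ∀ t : Fin n, ε t = true ↔ (t : ℕ) < n - 1) {l m s : ℕ} (hn : 1 ≤ n)
    (hs : s ≤ n - 1) (hsl : s ≤ l) (hsm : s ≤ m) (a b : Fin n → ℤ) :
    co ε a b (xiA1 q ι ε l m s) = if Good ε l m s a b then ι (xiCoeff q m s a b) else 0 := by
  by_cases hV : Vd ε a ∧ Vd ε b
  swap
  · rw [if_neg fun h => hV ⟨h.va, h.vb⟩]
    by_contra h0
    exact hV (co_Vd h0)
  have hmem : ∀ i : Fin s → ℕ, i ∈ Fintype.piFinset (fun _ : Fin s => Finset.range 2) ↔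
      ∀ u, i u ≤ 1 := by
    intro i
    simp [Fintype.mem_piFinset]
  simp only [xiA1, map_sum, map_smul, co_kk _ _ _ _ hV.1 hV.2]
  split_ifs with hG
  · obtain ⟨j, hj, i, hi, hsum, rfl, rfl⟩ := hG.exists_win hε hn hs
    rw [Finset.sum_eq_single j, Finset.sum_eq_single i]
    · rw [if_pos hsum, if_pos ⟨rfl, rfl⟩, xiCoeff_win q hn hs hsm hj _ (ivf_le hi)
        (by rw [sum_ivf, hsum]) _ _ hq0, smul_eq_mul, mul_one]
    · intro i' _ hne
      rw [if_neg (c := _ ∧ _) fun h => hne (win_inj hn hs h.1 h.2).2, smul_zero]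
    · intro h
      exact absurd ((hmem i).2 hi) h
    · intro j' _ hne
      refine Finset.sum_eq_zero fun i' _ => ?_
      rw [if_neg (c := _ ∧ _) fun h => hne (win_inj hn hs h.1 h.2).1, smul_zero]
    · intro h
      exact absurd (Finset.mem_range.2 (by omega)) h
  · refine Finset.sum_eq_zero fun j hj => Finset.sum_eq_zero fun i hi => ?_
    have hj' : j ≤ s := by simpa [Nat.lt_succ_iff] using hj
    by_cases h1 : ∑ u, i u = s - j
    · rw [if_neg (c := _ ∧ _), smul_zero]
      rintro ⟨rfl, rfl⟩
      exact hG (good_win hε hn hs hj' hsl hsm _ (ivf_le ((hmem i).1 hi)) (by rw [sum_ivf, h1]))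
    · rw [if_neg h1, zero_smul]

end

/-! ### The vectors `ξ_s` are singular -/

section
variable {L : Type} [Field L] {n : ℕ} {ε : Fin n → Bool}

lemma fsum_move (p r : Fin n) (hpr : (p : ℕ) + 1 = r) (c : Fin n → ℤ) :
    fsum (c + dlt p - dlt r) = fsum c + 1 - if (r : ℕ) < n - 1 then 1 else 0 := by
  have h : ∀ s : Fin n, (∑ t : Fin n, if (t : ℕ) < n - 1 then dlt (s : ℕ) t else 0) =
      if (s : ℕ) < n - 1 then 1 else 0 := by
    intro s
    have := sum_dlt s (fun t : Fin n => if (t : ℕ) < n - 1 then 1 else 0)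
    simpa only [mul_ite, mul_one, mul_zero] using this
  have h2 : ∀ t : Fin n, (if (t : ℕ) < n - 1 then
      (c + dlt (p : ℕ) - dlt (r : ℕ) : Fin n → ℤ) t else 0) =
      (if (t : ℕ) < n - 1 then c t else 0) + (if (t : ℕ) < n - 1 then dlt (p : ℕ) t else 0) -
        (if (t : ℕ) < n - 1 then dlt (r : ℕ) t else 0) := by
    intro t
    split_ifs <;> simp
  rw [fsum, Finset.sum_congr rfl fun t _ => h2 t, Finset.sum_sub_distrib, Finset.sum_add_distrib,
    h, h, if_pos (show (p : ℕ) < n - 1 by omega)]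
  rfl

/-- Bilinearity of `finv`, in the form needed to compare the two terms of the killing equation. -/
lemma finv_sub (a b a' b' : Fin n → ℤ) :
    finv (a + a') b - finv a (b + b') = finv a' b - finv a b' := by
  simp only [finv, ← Finset.sum_sub_distrib]
  refine Finset.sum_congr rfl fun u _ => Finset.sum_congr rfl fun t _ => ?_
  split_ifs <;> simp <;> ring

lemma finv_move_left (p r : Fin n) (hpr : (p : ℕ) + 1 = r) (b : Fin n → ℤ) :
    finv (dlt p - dlt r) b = if (r : ℕ) < n - 1 then b r else 0 := by
  have h : finv (dlt p - dlt r) b =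
      ∑ u : Fin n, dlt (p : ℕ) u * (∑ t, if u < t ∧ (t : ℕ) < n - 1 then b t else 0) -
      ∑ u : Fin n, dlt (r : ℕ) u * (∑ t, if u < t ∧ (t : ℕ) < n - 1 then b t else 0) := by
    simp only [finv, Finset.mul_sum, ← Finset.sum_sub_distrib]
    refine Finset.sum_congr rfl fun u _ => Finset.sum_congr rfl fun t _ => ?_
    split_ifs <;> simp <;> ring
  rw [h, sum_dlt, sum_dlt, ← Finset.sum_sub_distrib]
  have h2 : ∀ t : Fin n, ((if p < t ∧ (t : ℕ) < n - 1 then b t else 0) -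
      (if r < t ∧ (t : ℕ) < n - 1 then b t else 0)) =
      if t = r then (if (r : ℕ) < n - 1 then b r else 0) else 0 := by
    intro t
    by_cases h3 : t = r
    · subst h3
      simp [Fin.lt_def, ← hpr]
    · have h4 : (p < t ∧ (t : ℕ) < n - 1) ↔ (r < t ∧ (t : ℕ) < n - 1) := by
        have h5 : (t : ℕ) ≠ r := fun h => h3 (Fin.ext h)
        simp only [Fin.lt_def]
        omega
      rw [if_congr h4 rfl rfl, sub_self, if_neg h3]
  rw [Finset.sum_congr rfl fun t _ => h2 t]
  simp

lemma finv_move_right (p r : Fin n) (hpr : (p : ℕ) + 1 = r) (a : Fin n → ℤ) :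
    finv a (dlt p - dlt r) = if (r : ℕ) < n - 1 then -a p else fsum a - a p := by
  have h : finv a (dlt p - dlt r) =
      ∑ t : Fin n, dlt (p : ℕ) t * (∑ u, if u < t ∧ (t : ℕ) < n - 1 then a u else 0) -
      ∑ t : Fin n, dlt (r : ℕ) t * (∑ u, if u < t ∧ (t : ℕ) < n - 1 then a u else 0) := by
    rw [finv, Finset.sum_comm]
    simp only [Finset.mul_sum, ← Finset.sum_sub_distrib]
    refine Finset.sum_congr rfl fun u _ => Finset.sum_congr rfl fun t _ => ?_
    split_ifs <;> simp <;> ring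
  rw [h, sum_dlt, sum_dlt]
  have hp : (p : ℕ) < n - 1 := by omega
  have hap : a p = ∑ u, if u = p then a p else 0 := by simp
  split_ifs with hr
  · rw [hap, ← Finset.sum_neg_distrib, ← Finset.sum_sub_distrib]
    refine Finset.sum_congr rfl fun u _ => ?_
    simp only [Fin.lt_def, Fin.ext_iff, hp, hr, and_true]
    by_cases h3 : (u : ℕ) = p
    · have : u = p := Fin.ext h3
      subst this
      simp [← hpr]
    · have h4 : ((u : ℕ) < p) ↔ ((u : ℕ) < r) := by omega
      simp [h4, h3]
  · rw [hap, fsum, ← Finset.sum_sub_distrib, ← Finset.sum_sub_distrib]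
    refine Finset.sum_congr rfl fun u _ => ?_
    simp only [Fin.lt_def, Fin.ext_iff, hp, hr, and_true, and_false, if_false, sub_zero]
    by_cases h3 : (u : ℕ) = p
    · have : u = p := Fin.ext h3
      subst this
      simp [hp]
    · have h4 : ((u : ℕ) < p) ↔ ((u : ℕ) < n - 1) := by
        have := u.2
        omega
      simp [h4, h3]

lemma sum_move (p r : Fin n) (c : Fin n → ℤ) :
    ∑ t, (c + dlt (p : ℕ) - dlt (r : ℕ) : Fin n → ℤ) t = ∑ t, c t := by
  have h : ∀ s : Fin n, ∑ t : Fin n, dlt (s : ℕ) t = 1 := fun s => by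
    simpa using sum_dlt s (fun _ => 1)
  simp [Finset.sum_add_distrib, Finset.sum_sub_distrib, h]

/-- Local occupation numbers around a move from `p` to `r = p + 1` inside a `Good` pair. -/
lemma good_local (hε : ∀ t : Fin n, ε t = true ↔ (t : ℕ) < n - 1) {s : ℕ}
    (hn : 1 ≤ n) (p r : Fin n) (hpr : (p : ℕ) + 1 = r)
    {a b : Fin n → ℤ} (ha : Vd ε a) (hb : Vd ε b)
    (hcol : ∀ t : Fin n, (t : ℕ) < n - 1 →
      a t + b t + dlt p t - dlt r t = if (t : ℕ) < n - 1 - s then 0 else 1) :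
    a p = 0 ∧ b p = 0 ∧ ((r : ℕ) < n - 1 → a r = 1 ∧ b r = 1) := by
  have h1 := (Vd_iff hε a).1 ha
  have h2 := (Vd_iff hε b).1 hb
  have hne : p ≠ r := by rintro rfl; omega
  have h3 := hcol p (by omega)
  have h4 := hcol r
  have h5 := h1 p
  have h6 := h2 p
  have h7 := h1 r
  have h8 := h2 r
  simp only [dlt_apply, if_true, hne, hne.symm, if_false] at h3 h4
  split_ifs at h3 h4 <;> omega

/-- The two families of labels occurring in the killing equation of `ξ_s` coincide. -/
lemma good_move (hε : ∀ t : Fin n, ε t = true ↔ (t : ℕ) < n - 1) {l m s : ℕ} (hn : 1 ≤ n)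
    (hs : s ≤ n - 1) (hsl : s ≤ l) (p r : Fin n) (hpr : (p : ℕ) + 1 = r)
    {a b : Fin n → ℤ} (ha : Vd ε a) (hb : Vd ε b) (h : Good ε l m s a (b + dlt p - dlt r)) :
    Good ε l m s (a + dlt p - dlt r) b := by
  have hcol : ∀ t : Fin n, (t : ℕ) < n - 1 →
      a t + b t + dlt p t - dlt r t = if (t : ℕ) < n - 1 - s then 0 else 1 := by
    intro t ht
    rw [← h.col t ht]
    simp only [Pi.add_apply, Pi.sub_apply]
    ring
  obtain ⟨h1, h2, h3⟩ := good_local hε hn p r hpr ha hb hcol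
  refine ⟨?_, hb, ?_, ?_, ?_⟩
  · have hva := (Vd_iff hε a).1 ha
    rw [Vd_iff hε]
    intro t
    have h4 := hva t
    have hne : p ≠ r := by rintro rfl; omega
    have h5 : ¬ (r : ℕ) < n - 1 → 1 ≤ a r := by
      intro hr
      have hr' : (r : ℕ) = n - 1 := by omega
      have e1 := h.fsum_add hn hs
      have e2 := sum_eq_fsum_add_last r hr' a
      have e3 := fsum_nonneg hb
      rw [fsum_move p r hpr, if_neg hr] at e1
      rw [h.suma] at e2
      omega
    simp only [Pi.add_apply, Pi.sub_apply, dlt_apply]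
    split_ifs with h6 h7 h7
    · exact absurd (h6.symm.trans h7) hne
    · subst h6; omega
    · subst h7
      by_cases hr : (t : ℕ) < n - 1
      · have := h3 hr
        omega
      · have := h5 hr
        omega
    · omega
  · intro t ht
    rw [← hcol t ht]
    simp only [Pi.add_apply, Pi.sub_apply]
    ring
  · rw [sum_move, h.suma]
  · rw [← h.sumb, sum_move]

lemma Good.symm {l m s : ℕ} {a b : Fin n → ℤ} (h : Good ε l m s a b) : Good ε m l s b a :=
  ⟨h.vb, h.va, fun t ht => by rw [add_comm, h.col t ht], h.sumb, h.suma⟩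

lemma qc_fermi (q : ℂ) (hε : ∀ t : Fin n, ε t = true ↔ (t : ℕ) < n - 1) (r : Fin n) :
    qc q ε r = if (r : ℕ) < n - 1 then -q⁻¹ else q := by
  simp only [qc, r.2, dif_pos, Fin.eta, hε]

/-- `ξ_s` is annihilated by `Δ(e_r)` for every `r ≠ 0`: the labels in the two terms of the coordinate
equation are simultaneously `Good`, and then their coefficients cancel. -/
lemma dE_xi {q : ℂ} (hq0 : q ≠ 0) (hqq : q - q⁻¹ ≠ 0) (ι : ℂ →+* L) (x y : L)
    (hε : ∀ t : Fin n, ε t = true ↔ (t : ℕ) < n - 1) {l m s : ℕ} (hn : 1 ≤ n)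
    (hs : s ≤ n - 1) (hsl : s ≤ l) (hsm : s ≤ m) (r : Fin n) (hr0 : (r : ℕ) ≠ 0) :
    dE q ι ε x y r (xiA1 q ι ε l m s) = 0 := by
  classical
  obtain ⟨p, hpr⟩ : ∃ p : Fin n, (p : ℕ) + 1 = r := ⟨⟨r - 1, by omega⟩, by simp only; omega⟩
  refine co_ext fun a b ha hb => ?_
  rw [map_zero, co_dE hqq ι x y p r hpr ((hε p).2 (by omega)) _ a b ha hb,
    co_xi hq0 ι hε hn hs hsl hsm, co_xi hq0 ι hε hn hs hsl hsm]
  by_cases hG : Good ε l m s a (b + dlt p - dlt r)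
  · have hG' := good_move hε hn hs hsl p r hpr ha hb hG
    rw [if_pos hG, if_pos hG', ← map_mul, ← map_add, map_eq_zero]
    obtain ⟨h1, h2, h3⟩ := good_local hε hn p r hpr ha hb (fun t ht => by
      rw [← hG.col t ht]
      simp only [Pi.add_apply, Pi.sub_apply]
      ring)
    have hI := finv_sub a b (dlt p - dlt r) (dlt p - dlt r)
    rw [finv_move_left p r hpr, finv_move_right p r hpr, ← add_sub_assoc, ← add_sub_assoc] at hI
    have hJ := fsum_move p r hpr b
    rw [xiCoeff, xiCoeff, kap, h2, qc_fermi q hε r, neg_zero, zpow_zero, one_mul, hJ]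
    by_cases hr : (r : ℕ) < n - 1
    · obtain ⟨h4, h5⟩ := h3 hr
      rw [if_pos hr, if_pos hr, h1, h5] at hI
      have hI' : finv (a + dlt p - dlt r) b = finv a (b + dlt p - dlt r) + 1 := by linarith
      rw [if_pos hr, if_pos hr, h5, hI', ← add_assoc, zpow_add₀ hq0 _ 1]
      simp only [zpow_one, add_sub_cancel_right]
      field_simp
      ring
    · have hr' : (r : ℕ) = n - 1 := by have := r.2; omega
      rw [if_neg hr, if_neg hr, h1] at hI
      have e1 := hG'.fsum_add hn hs
      rw [fsum_move p r hpr, if_neg hr] at e1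
      have e2 := sum_eq_fsum_add_last r hr' b
      rw [hG'.sumb] at e2
      rw [if_neg hr, if_neg hr, sub_zero, zpow_add₀ (by norm_num), mul_left_comm, ← zpow_add₀ hq0]
      have e3 : b r + (fsum b * ((m : ℤ) - s + 1) + finv (a + dlt p - dlt r) b) =
          (fsum b + 1) * ((m : ℤ) - s + 1) + finv a (b + dlt p - dlt r) := by
        linarith
      rw [e3]
      simp
  · have hG' : ¬ Good ε l m s (a + dlt p - dlt r) b := fun h =>
      hG (good_move hε hn hs hsm p r hpr hb ha h.symm).symm
    rw [if_neg hG, if_neg hG']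
    simp

lemma good_base (hε : ∀ t : Fin n, ε t = true ↔ (t : ℕ) < n - 1) {l m s : ℕ} (hn : 1 ≤ n)
    (hs : s ≤ n - 1) (hsl : s ≤ l) : Good ε l m s (baseA n l s) (baseB n m) := by
  refine ⟨?_, ?_, ?_, ?_, ?_⟩
  · rw [Vd_iff hε]
    intro t
    simp only [baseA]
    split_ifs <;> omega
  · rw [Vd_iff hε]
    intro t
    simp only [baseB]
    split_ifs <;> omega
  · intro t ht
    simp [baseA, baseB, ht]
  · have := sum_win (n := n) (k := n - 1 - s) (s := s) hn (by omega) (fun _ => 1) ((l : ℤ) - s)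
    simpa [baseA] using this
  · have := sum_win (n := n) (k := n - 1) (s := 0) hn (by omega) (fun _ => 1) (m : ℤ)
    simp only [Finset.range_zero, Finset.sum_empty, zero_add] at this
    rw [← this]
    refine Finset.sum_congr rfl fun t _ => ?_
    simp only [baseB]
    split_ifs <;> rfl

lemma xiCoeff_base (q : ℂ) (l m s : ℕ) : xiCoeff q m s (baseA n l s) (baseB n m) = 1 := by
  have h1 : fsum (baseB n m) = 0 :=
    Finset.sum_eq_zero fun t _ => by simp only [baseB]; split_ifs <;> rfl
  have h2 : finv (baseA n l s) (baseB n m) = 0 :=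
    Finset.sum_eq_zero fun u _ => Finset.sum_eq_zero fun t _ => by
      simp only [baseB]
      split_ifs <;> simp_all
  simp [xiCoeff, h1, h2]

/-- The total weight of a `Good` pair depends only on `l`, `m`, `s`. -/
lemma Good.add_eq (hn : 1 ≤ n) {l m s : ℕ} (hs : s ≤ n - 1) {a b : Fin n → ℤ}
    (h : Good ε l m s a b) : a + b = baseA n (l + m) s :=
  eq_baseA hn hs (fun t ht => h.col t ht) (by
    simp only [Pi.add_apply, Finset.sum_add_distrib, h.suma, h.sumb]
    push_cast
    rfl)

lemma kap_base (q : ℂ) (hε : ∀ t : Fin n, ε t = true ↔ (t : ℕ) < n - 1) (p r : Fin n)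
    (hpr : (p : ℕ) + 1 = r) (hr : (r : ℕ) = n - 1) (k s : ℕ) :
    kap q ε p r (baseA n k s) = if s = 0 then q ^ (k : ℤ) else -q * q ^ ((k : ℤ) - s) := by
  have hn := r.2
  rw [kap, qc_fermi q hε, qc_fermi q hε]
  simp only [baseA]
  rw [if_pos (show (p : ℕ) < n - 1 by omega), if_neg (show ¬ (r : ℕ) < n - 1 by omega),
    if_neg (show ¬ (r : ℕ) < n - 1 - s by omega)]
  by_cases hs : s = 0
  · subst hs
    have h2 : ¬ (r : ℕ) < n - 1 := by omega
    rw [if_pos (by omega)]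
    simp [h2]
  · have h2 : ¬ (r : ℕ) < n - 1 := by omega
    rw [if_neg (by omega), if_pos (by omega), if_neg hs, if_neg h2, zpow_neg_one, inv_neg, inv_inv]

/-- The eigenvalue of `Δ(k_{n-1})` separates the values of `s`. -/
lemma kap_base_inj {q : ℂ} (hq0 : q ≠ 0) (hq : ∀ k : ℕ, k ≠ 0 → q ^ k ≠ 1)
    (hε : ∀ t : Fin n, ε t = true ↔ (t : ℕ) < n - 1) (p r : Fin n)
    (hpr : (p : ℕ) + 1 = r) (hr : (r : ℕ) = n - 1) (k s s' : ℕ)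
    (h : kap q ε p r (baseA n k s) = kap q ε p r (baseA n k s')) : s = s' := by
  have hz : ∀ z : ℤ, q ^ z = 1 → z = 0 := by
    intro z hz
    obtain ⟨k, rfl | rfl⟩ := z.eq_nat_or_neg
    · by_contra h0
      exact hq k (by simpa using h0) (by simpa using hz)
    · by_contra h0
      exact hq k (by simpa using h0) (by simpa using hz)
  have hinj : ∀ z w : ℤ, q ^ z = q ^ w → z = w := by
    intro z w h
    have := hz (z - w) (by rw [zpow_sub₀ hq0, h, div_self (zpow_ne_zero _ hq0)])
    omega
  -- squaring reduces to equal exponents, where the two sides differ by a sign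
  have hsgn : ∀ z w : ℤ, q ^ z ≠ -q * q ^ w := by
    intro z w h
    have h1 : q ^ z = -q ^ (w + 1) := by rw [h, zpow_add₀ hq0, zpow_one]; ring
    have h2 : z + z = (w + 1) + (w + 1) := by
      apply hinj
      rw [zpow_add₀ hq0, h1, zpow_add₀ hq0 (w + 1)]
      ring
    have h3 : z = w + 1 := by omega
    rw [h3] at h1
    exact zpow_ne_zero (w + 1) hq0 (CharZero.eq_neg_self_iff.1 h1)
  rw [kap_base q hε p r hpr hr, kap_base q hε p r hpr hr] at h
  split_ifs at h with h1 h2 h2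
  · omega
  · exact absurd h (hsgn _ _)
  · exact absurd h.symm (hsgn _ _)
  · have := hinj _ _ (mul_left_cancel₀ (neg_ne_zero.2 hq0) h)
    omega

end

/-- classification of singular vectors in `𝒲_l⊗𝒲_m`, case `κ = n-1`. -/
theorem statement_10 (q : ℂ) (hq0 : q ≠ 0) (hq : ∀ k : ℕ, k ≠ 0 → q ^ k ≠ 1)
    {L : Type} [Field L] (ι : ℂ →+* L) (hι : Function.Injective ι)
    (x y : L) (hx : x ≠ 0) (hy : y ≠ 0)
    (n l m : ℕ) [NeZero n] (hn : 2 ≤ n)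
    (ε : Fin n → Bool) (hε : ε = fun t : Fin n => decide ((t : ℕ) < n - 1)) :
    (∀ v : WW L ε, v ∈ WWlm L ε l m → v ≠ 0 →
      (∀ i : Fin n, ∃ c : L, dK q ι ε 1 i v = c • v) →
      (∀ i : Fin n, (i : ℕ) ≠ 0 → dE q ι ε x y i v = 0) →
      ∃ s : ℕ, s ≤ min (n - 1) (min l m) ∧
        ∃ c : L, c ≠ 0 ∧ v = c • xiA1 q ι ε l m s) ∧
    (∀ s : ℕ, s ≤ min (n - 1) (min l m) →
      xiA1 q ι ε l m s ≠ 0 ∧ xiA1 q ι ε l m s ∈ WWlm L ε l m ∧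
      (∀ i : Fin n, (i : ℕ) ≠ 0 → dE q ι ε x y i (xiA1 q ι ε l m s) = 0) ∧
      (∀ i : Fin n, ∃ c : L,
        dK q ι ε 1 i (xiA1 q ι ε l m s) = c • xiA1 q ι ε l m s)) := by
  classical
  have hε' : ∀ t : Fin n, ε t = true ↔ (t : ℕ) < n - 1 := by
    intro t
    simp [hε]
  have hn1 : 1 ≤ n := by omega
  have hqq : q - q⁻¹ ≠ 0 := by
    intro h
    refine hq 2 two_ne_zero ?_
    rw [sub_eq_zero] at h
    rw [sq]
    nth_rewrite 1 [h]
    exact inv_mul_cancel₀ hq0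
  have hmin : ∀ s, s ≤ min (n - 1) (min l m) ↔ s ≤ n - 1 ∧ s ≤ l ∧ s ≤ m := fun s => by
    simp only [le_min_iff]
  have hmemxi : ∀ s, s ≤ min (n - 1) (min l m) → xiA1 q ι ε l m s ∈ WWlm L ε l m := by
    intro s hs
    obtain ⟨h1, h2, h3⟩ := (hmin s).1 hs
    refine mem_of_sum fun a b h => ?_
    rw [co_xi hq0 ι hε' hn1 h1 h2 h3] at h
    have hG : Good ε l m s a b := of_not_not fun hG => h (if_neg hG)
    exact ⟨hG.suma, hG.sumb⟩
  have hbase : ∀ s, s ≤ min (n - 1) (min l m) →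
      co ε (baseA n l s) (baseB n m) (xiA1 q ι ε l m s) = 1 := by
    intro s hs
    obtain ⟨h1, h2, h3⟩ := (hmin s).1 hs
    rw [co_xi hq0 ι hε' hn1 h1 h2 h3, if_pos (good_base hε' hn1 h1 h2), xiCoeff_base, map_one]
  have hwt : ∀ s, s ≤ min (n - 1) (min l m) →
      baseA n l s + baseB n m = baseA n (l + m) s := by
    intro s hs
    obtain ⟨h1, h2, h3⟩ := (hmin s).1 hs
    exact (good_base hε' hn1 h1 h2).add_eq hn1 h1
  refine ⟨?_, ?_⟩
  · intro v hv hv0 hK hE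
    obtain ⟨s, hs, hvs⟩ : ∃ s, s ≤ min (n - 1) (min l m) ∧
        co ε (baseA n l s) (baseB n m) v ≠ 0 := by
      by_contra! h
      exact hv0 (eq_zero_of_killed hq0 hqq ι x y hn1 hε' v hv hE h)
    obtain ⟨h1, h2, h3⟩ := (hmin s).1 hs
    refine ⟨s, hs, co ε (baseA n l s) (baseB n m) v, hvs, ?_⟩
    -- `v` and its multiple of `ξ_s` agree at the base pair for `s`; at the others both vanish
    rw [← sub_eq_zero]
    refine eq_zero_of_killed hq0 hqq ι x y hn1 hε' _
      (Submodule.sub_mem _ hv (Submodule.smul_mem _ _ (hmemxi s hs))) ?_ ?_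
    · intro i hi
      rw [map_sub, map_smul, hE i hi, dE_xi hq0 hqq ι x y hε' hn1 h1 h2 h3 i hi, smul_zero,
        sub_zero]
    · intro s' hs'
      rw [map_sub, map_smul]
      by_cases hss : s' = s
      · subst hss
        rw [hbase s' hs, smul_eq_mul, mul_one, sub_self]
      -- for `s' ≠ s`, the eigenvalue of `Δ(k_{n-1})` excludes a nonzero coefficient at both pairs
      · let r : Fin n := ⟨n - 1, by omega⟩
        let p : Fin n := ⟨n - 2, by omega⟩
        have hpr : (p : ℕ) + 1 = r := by simp only [p, r]; omega
        have hmod : ((r : ℕ) + n - 1) % n = p := by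
          have : (r : ℕ) + n - 1 = p + n := by omega
          rw [this, Nat.add_mod_right, Nat.mod_eq_of_lt p.2]
        have hne : kap q ε p r (baseA n (l + m) s') ≠ kap q ε p r (baseA n (l + m) s) :=
          fun h => hss (kap_base_inj hq0 hq hε' p r hpr rfl _ _ _ h)
        obtain ⟨c, hc⟩ := hK r
        have key : ∀ u, u ≤ min (n - 1) (min l m) → co ε (baseA n l u) (baseB n m) v ≠ 0 →
            ι (kap q ε p r (baseA n (l + m) u)) = c := by
          intro u hu h0
          have := co_dK hq0 ι p r hmod v (baseA n l u) (baseB n m)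
          rw [hc, map_smul, smul_eq_mul, hwt u hu] at this
          exact (mul_right_cancel₀ h0 this).symm
        have hz : co ε (baseA n l s') (baseB n m) v = 0 := by
          by_contra h0
          exact hne (hι ((key s' hs' h0).trans (key s hs hvs).symm))
        rw [hz, co_xi hq0 ι hε' hn1 h1 h2 h3, if_neg, smul_zero, sub_zero]
        intro hG
        have h4 := hG.add_eq hn1 h1
        rw [hwt s' hs'] at h4
        exact hne (by rw [h4])
  · intro s hs
    obtain ⟨h1, h2, h3⟩ := (hmin s).1 hs
    refine ⟨?_, hmemxi s hs, fun i hi => dE_xi hq0 hqq ι x y hε' hn1 h1 h2 h3 i hi, fun i => ?_⟩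
    · intro h0
      have := hbase s hs
      rw [h0, map_zero] at this
      exact zero_ne_one this
    · refine ⟨ι (kap q ε ⟨((i : ℕ) + n - 1) % n, Nat.mod_lt _ (by omega)⟩ i
        (baseA n (l + m) s)), co_ext fun a b _ _ => ?_⟩
      rw [co_dK hq0 ι ⟨((i : ℕ) + n - 1) % n, Nat.mod_lt _ (by omega)⟩ i rfl, map_smul,
        smul_eq_mul, co_xi hq0 ι hε' hn1 h1 h2 h3]
      split_ifs with hG
      · rw [hG.add_eq hn1 h1]
      · simp

end TetraGQ
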